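/- Let U ⊂ ℝ² be a bounded open set whose boundary is a C³ curve, let Q = {x₁, …, x_k} be a finite set of points of ∂U, and let p > 2 and C₀ > 0. Let V : U → ℝ satisfy 0 ≤ V(x) ≤ Σ_{i=1}^k C₀ / |x − x_i| for all x ∈ U. Suppose u : U → ℝ belongs to L^p(U), is three times continuously differentiable on the closure of U with the points of Q removed, satisfies Δu(x) = V(x) u(x) for all x ∈ U, and u = 0 on ∂U \ Q. Then u ≡ 0 on U. -/

import Mathlib

noncomputable section

open Real MeasureTheory Set

/-- Inner radius of the `j`-th rectangle: `r_j = 2^(-j)`. -/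
def rW (j : ℕ) : ℝ := (2 : ℝ) ^ (-(j : ℝ))

/-- Height of the `j`-th rectangle: `h_j = 2^(-β (j-1))`. -/
def hH (β : ℝ) (j : ℕ) : ℝ := (2 : ℝ) ^ (-β * ((j : ℝ) - 1))

/-- The rectangle `S_j` in the `(r, x₃)` cross-section. -/
def Srect (β : ℝ) (j : ℕ) : Set (ℝ × ℝ) :=
  {p : ℝ × ℝ | rW j ≤ p.1 ∧ p.1 < rW (j - 1) ∧ 0 < p.2 ∧ p.2 < hH β j}

/-- The `(r, x₃)` cross-section of the domain `D_m`. -/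
def Ddom (β : ℝ) (m : ℕ) : Set (ℝ × ℝ) := ⋃ j ∈ Finset.Icc 1 m, Srect β j

/-- The horizontal part `∂^H D_m` of the boundary of `D_m` (where `x₃` is locally constant). -/
def bdH (β : ℝ) (m : ℕ) : Set (ℝ × ℝ) :=
  {p : ℝ × ℝ | p.2 = 0 ∧ rW m ≤ p.1 ∧ p.1 ≤ 1} ∪
    ⋃ j ∈ Finset.Icc 1 m,
      {p : ℝ × ℝ | p.2 = hH β j ∧ rW j ≤ p.1 ∧ p.1 ≤ rW (j - 1)}

/-- The vertical part `∂^V D_m` of the boundary of `D_m` (where `r` is locally constant). -/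
def bdV (β : ℝ) (m : ℕ) : Set (ℝ × ℝ) :=
  {p : ℝ × ℝ | p.1 = 1 ∧ 0 ≤ p.2 ∧ p.2 ≤ 1} ∪
    {p : ℝ × ℝ | p.1 = rW m ∧ 0 ≤ p.2 ∧ p.2 ≤ hH β m} ∪
    ⋃ j ∈ Finset.Icc 1 (m - 1),
      {p : ℝ × ℝ | p.1 = rW j ∧ hH β (j + 1) ≤ p.2 ∧ p.2 ≤ hH β j}

/-- The full boundary `∂ D_m` of `D_m`. -/
def bdD (β : ℝ) (m : ℕ) : Set (ℝ × ℝ) := bdH β m ∪ bdV β m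

/-- The corner points of the polygonal cross-section of `D_m`
(i.e. the corner circles of the 3D domain). -/
def cornerSet (β : ℝ) (m : ℕ) : Set (ℝ × ℝ) :=
  ({(rW m, 0), ((1 : ℝ), 0), ((1 : ℝ), (1 : ℝ)), (rW m, hH β m)} : Set (ℝ × ℝ)) ∪
    ⋃ j ∈ Finset.Icc 1 (m - 1),
      ({(rW j, hH β j), (rW j, hH β (j + 1))} : Set (ℝ × ℝ))

/-- Radial partial derivative `∂_r`. -/
def pdr (F : ℝ × ℝ → ℝ) (p : ℝ × ℝ) : ℝ := deriv (fun r => F (r, p.2)) p.1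

/-- Vertical partial derivative `∂_{x₃}`. -/
def pdz (F : ℝ × ℝ → ℝ) (p : ℝ × ℝ) : ℝ := deriv (fun z => F (p.1, z)) p.2

/-- The axially symmetric Laplacian `Δ = ∂_r² + (1/r) ∂_r + ∂_{x₃}²`. -/
def cylLap (F : ℝ × ℝ → ℝ) (p : ℝ × ℝ) : ℝ :=
  pdr (pdr F) p + (1 / p.1) * pdr F p + pdz (pdz F) p

/-- The integral of an axially symmetric function over the 3-dimensional domain `D_m`,
computed in the cross-section: `∫_{D_m} f dx = 2π ∬ F r dr dx₃`. -/
def cylIntegral (β : ℝ) (m : ℕ) (F : ℝ × ℝ → ℝ) : ℝ :=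
  ∫ p in Ddom β m, F p * (2 * π * p.1)

/-- The vertical cross-section segment `D_m ∩ {r = c}` of the cross-section. -/
def vertSeg (β : ℝ) (m : ℕ) (c : ℝ) : Set ℝ := {z : ℝ | (c, z) ∈ Ddom β m}
/-- Rotation of the plane by angle `θ`. -/
def rotPlane (θ : ℝ) (x : ℝ × ℝ) : ℝ × ℝ :=
  (Real.cos θ * x.1 - Real.sin θ * x.2, Real.sin θ * x.1 + Real.cos θ * x.2)

/-- Euclidean distance in the plane `ℝ × ℝ`. -/
def euclDist (x y : ℝ × ℝ) : ℝ := Real.sqrt ((x.1 - y.1) ^ 2 + (x.2 - y.2) ^ 2)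

open Filter Topology

/-- The derivative of `f` at `x` in the direction `v`. -/
def dirDeriv (v : ℝ × ℝ) (f : ℝ × ℝ → ℝ) (x : ℝ × ℝ) : ℝ := fderiv ℝ f x v

/-- The Laplacian on `ℝ × ℝ`, through directional derivatives. -/
def planeLaplacian (f : ℝ × ℝ → ℝ) (x : ℝ × ℝ) : ℝ :=
  dirDeriv (1, 0) (dirDeriv (1, 0) f) x + dirDeriv (0, 1) (dirDeriv (0, 1) f) x

section Calculus

variable {v x : ℝ × ℝ} {f g : ℝ × ℝ → ℝ}

lemma Filter.EventuallyEq.dirDeriv_eventuallyEq (h : f =ᶠ[𝓝 x] g) (v : ℝ × ℝ) :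
    dirDeriv v f =ᶠ[𝓝 x] dirDeriv v g := by
  filter_upwards [h.fderiv (𝕜 := ℝ)] with y hy
  simp only [dirDeriv, hy]

lemma Filter.EventuallyEq.dirDeriv_eq (h : f =ᶠ[𝓝 x] g) (v : ℝ × ℝ) :
    dirDeriv v f x = dirDeriv v g x :=
  (h.dirDeriv_eventuallyEq v).eq_of_nhds

lemma Filter.EventuallyEq.planeLaplacian_eq (h : f =ᶠ[𝓝 x] g) :
    planeLaplacian f x = planeLaplacian g x := by
  simp only [planeLaplacian, (h.dirDeriv_eventuallyEq _).dirDeriv_eq]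

lemma ContDiffAt.dirDeriv_one (hf : ContDiffAt ℝ 2 f x) (v : ℝ × ℝ) :
    ContDiffAt ℝ 1 (dirDeriv v f) x :=
  (hf.fderiv_right (m := 1) (by norm_num)).clm_apply contDiffAt_const

lemma ContDiffAt.eventually_differentiableAt (hf : ContDiffAt ℝ 2 f x) :
    ∀ᶠ y in 𝓝 x, DifferentiableAt ℝ f y :=
  (hf.eventually (by simp)).mono fun _ hy => hy.differentiableAt (by norm_num)

lemma dirDeriv_mul (hf : DifferentiableAt ℝ f x) (hg : DifferentiableAt ℝ g x) :
    dirDeriv v (fun y => f y * g y) x = dirDeriv v f x * g x + f x * dirDeriv v g x := by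
  have := (hf.hasFDerivAt.mul hg.hasFDerivAt).fderiv
  simp only [dirDeriv]
  erw [this]
  simp
  ring

lemma dirDeriv_add (hf : DifferentiableAt ℝ f x) (hg : DifferentiableAt ℝ g x) :
    dirDeriv v (fun y => f y + g y) x = dirDeriv v f x + dirDeriv v g x := by
  have := (hf.hasFDerivAt.add hg.hasFDerivAt).fderiv
  simp only [dirDeriv]
  erw [this]
  simp

lemma dirDeriv_sub (hf : DifferentiableAt ℝ f x) (hg : DifferentiableAt ℝ g x) :
    dirDeriv v (fun y => f y - g y) x = dirDeriv v f x - dirDeriv v g x := by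
  have := (hf.hasFDerivAt.sub hg.hasFDerivAt).fderiv
  simp only [dirDeriv]
  erw [this]
  simp

lemma dirDeriv_const (c : ℝ) : dirDeriv v (fun _ => c) x = 0 := by
  simp [dirDeriv]

lemma dirDeriv_neg : dirDeriv v (fun y => -f y) x = -dirDeriv v f x := by
  simp [dirDeriv, fderiv_fun_neg]

lemma dirDeriv_sum {ι : Type*} (s : Finset ι) {F : ι → ℝ × ℝ → ℝ}
    (hF : ∀ i ∈ s, DifferentiableAt ℝ (F i) x) :
    dirDeriv v (fun y => ∑ i ∈ s, F i y) x = ∑ i ∈ s, dirDeriv v (F i) x := by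
  simp [dirDeriv, fderiv_fun_sum hF]

lemma dirDeriv_comp {T : ℝ → ℝ} {t : ℝ} (hT : HasDerivAt T t (f x))
    (hf : DifferentiableAt ℝ f x) :
    dirDeriv v (fun y => T (f y)) x = t * dirDeriv v f x := by
  have := (hT.comp_hasFDerivAt x hf.hasFDerivAt).fderiv
  simp only [dirDeriv]
  erw [this]
  simp

lemma dirDeriv_dirDeriv_mul (hf : ContDiffAt ℝ 2 f x) (hg : ContDiffAt ℝ 2 g x) :
    dirDeriv v (dirDeriv v (fun y => f y * g y)) x =
      dirDeriv v (dirDeriv v f) x * g x + 2 * (dirDeriv v f x * dirDeriv v g x) +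
        f x * dirDeriv v (dirDeriv v g) x := by
  have h : dirDeriv v (fun y => f y * g y) =ᶠ[𝓝 x]
      fun y => dirDeriv v f y * g y + f y * dirDeriv v g y := by
    filter_upwards [hf.eventually_differentiableAt, hg.eventually_differentiableAt] with y h₁ h₂
    exact dirDeriv_mul h₁ h₂
  have hf1 := hf.differentiableAt (by norm_num)
  have hg1 := hg.differentiableAt (by norm_num)
  have hf2 := (hf.dirDeriv_one v).differentiableAt (by norm_num)
  have hg2 := (hg.dirDeriv_one v).differentiableAt (by norm_num)
  rw [h.dirDeriv_eq, dirDeriv_add (hf2.fun_mul hg1) (hf1.fun_mul hg2), dirDeriv_mul hf2 hg1,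
    dirDeriv_mul hf1 hg2]
  ring

lemma dirDeriv_dirDeriv_comp {T T₁ T₂ : ℝ → ℝ} (hT : ∀ s, HasDerivAt T (T₁ s) s)
    (hT₁ : ∀ s, HasDerivAt T₁ (T₂ s) s) (hf : ContDiffAt ℝ 2 f x) :
    dirDeriv v (dirDeriv v (fun y => T (f y))) x =
      T₂ (f x) * dirDeriv v f x ^ 2 + T₁ (f x) * dirDeriv v (dirDeriv v f) x := by
  have h : dirDeriv v (fun y => T (f y)) =ᶠ[𝓝 x] fun y => T₁ (f y) * dirDeriv v f y := by
    filter_upwards [hf.eventually_differentiableAt] with y h₁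
    exact dirDeriv_comp (hT _) h₁
  have hf1 := hf.differentiableAt (by norm_num)
  have hf2 := (hf.dirDeriv_one v).differentiableAt (by norm_num)
  rw [h.dirDeriv_eq, dirDeriv_mul ((hT₁ _).differentiableAt.fun_comp' x hf1) hf2,
    dirDeriv_comp (hT₁ _) hf1]
  ring

lemma dirDeriv_dirDeriv_sum {ι : Type*} (s : Finset ι) {F : ι → ℝ × ℝ → ℝ}
    (hF : ∀ i ∈ s, ContDiffAt ℝ 2 (F i) x) :
    dirDeriv v (dirDeriv v (fun y => ∑ i ∈ s, F i y)) x =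
      ∑ i ∈ s, dirDeriv v (dirDeriv v (F i)) x := by
  have h : dirDeriv v (fun y => ∑ i ∈ s, F i y) =ᶠ[𝓝 x] fun y => ∑ i ∈ s, dirDeriv v (F i) y := by
    have : ∀ᶠ y in 𝓝 x, ∀ i ∈ s, DifferentiableAt ℝ (F i) y :=
      (Finset.eventually_all s).2 fun i hi => (hF i hi).eventually_differentiableAt
    filter_upwards [this] with y hy
    exact dirDeriv_sum s hy
  rw [h.dirDeriv_eq, dirDeriv_sum]
  exact fun i hi => ((hF i hi).dirDeriv_one v).differentiableAt (by norm_num)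

lemma dirDeriv_one_sub (hf : DifferentiableAt ℝ f x) :
    dirDeriv v (fun y => 1 - f y) x = -dirDeriv v f x := by
  rw [dirDeriv_sub (differentiableAt_const _) hf, dirDeriv_const, zero_sub]

lemma dirDeriv_dirDeriv_one_sub (hf : ContDiffAt ℝ 2 f x) :
    dirDeriv v (dirDeriv v (fun y => 1 - f y)) x = -dirDeriv v (dirDeriv v f) x := by
  have h : dirDeriv v (fun y => 1 - f y) =ᶠ[𝓝 x] fun y => -dirDeriv v f y := by
    filter_upwards [hf.eventually_differentiableAt] with y hy
    exact dirDeriv_one_sub hy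
  rw [h.dirDeriv_eq, dirDeriv_neg]

lemma planeLaplacian_neg : planeLaplacian (fun y => -f y) x = -planeLaplacian f x := by
  have h : ∀ v, dirDeriv v (fun y => -f y) = fun y => -dirDeriv v f y :=
    fun v => funext fun y => dirDeriv_neg
  simp only [planeLaplacian, h, dirDeriv_neg]
  ring

lemma planeLaplacian_one_sub (hf : ContDiffAt ℝ 2 f x) :
    planeLaplacian (fun y => 1 - f y) x = -planeLaplacian f x := by
  simp only [planeLaplacian, dirDeriv_dirDeriv_one_sub hf]
  ring

lemma planeLaplacian_sum {ι : Type*} (s : Finset ι) {F : ι → ℝ × ℝ → ℝ}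
    (hF : ∀ i ∈ s, ContDiffAt ℝ 2 (F i) x) :
    planeLaplacian (fun y => ∑ i ∈ s, F i y) x = ∑ i ∈ s, planeLaplacian (F i) x := by
  simp only [planeLaplacian, dirDeriv_dirDeriv_sum s hF, Finset.sum_add_distrib]

lemma planeLaplacian_mul (hf : ContDiffAt ℝ 2 f x) (hg : ContDiffAt ℝ 2 g x) :
    planeLaplacian (fun y => f y * g y) x = planeLaplacian f x * g x +
      2 * (dirDeriv (1, 0) f x * dirDeriv (1, 0) g x + dirDeriv (0, 1) f x * dirDeriv (0, 1) g x) +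
        f x * planeLaplacian g x := by
  simp only [planeLaplacian, dirDeriv_dirDeriv_mul hf hg]
  ring

lemma planeLaplacian_comp {T T₁ T₂ : ℝ → ℝ} (hT : ∀ s, HasDerivAt T (T₁ s) s)
    (hT₁ : ∀ s, HasDerivAt T₁ (T₂ s) s) (hf : ContDiffAt ℝ 2 f x) :
    planeLaplacian (fun y => T (f y)) x =
      T₂ (f x) * (dirDeriv (1, 0) f x ^ 2 + dirDeriv (0, 1) f x ^ 2) +
        T₁ (f x) * planeLaplacian f x := by
  simp only [planeLaplacian, dirDeriv_dirDeriv_comp hT hT₁ hf]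
  ring

lemma pdr_eq_dirDeriv (hf : DifferentiableAt ℝ f x) : pdr f x = dirDeriv (1, 0) f x := by
  have h1 : HasDerivAt (fun r : ℝ => (r, x.2)) ((1 : ℝ), (0 : ℝ)) x.1 :=
    (hasDerivAt_id x.1).prodMk (hasDerivAt_const _ _)
  have hf' : HasFDerivAt f (fderiv ℝ f x) ((fun r : ℝ => (r, x.2)) x.1) := hf.hasFDerivAt
  exact (hf'.comp_hasDerivAt x.1 h1).deriv

lemma pdz_eq_dirDeriv (hf : DifferentiableAt ℝ f x) : pdz f x = dirDeriv (0, 1) f x := by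
  have h1 : HasDerivAt (fun r : ℝ => (x.1, r)) ((0 : ℝ), (1 : ℝ)) x.2 :=
    (hasDerivAt_const _ _).prodMk (hasDerivAt_id x.2)
  have hf' : HasFDerivAt f (fderiv ℝ f x) ((fun r : ℝ => (x.1, r)) x.2) := hf.hasFDerivAt
  exact (hf'.comp_hasDerivAt x.2 h1).deriv

lemma pdr_pdr_add_pdz_pdz_eq_planeLaplacian (hf : ContDiffAt ℝ 2 f x) :
    pdr (pdr f) x + pdz (pdz f) x = planeLaplacian f x := by
  have h1 : pdr f =ᶠ[𝓝 x] dirDeriv (1, 0) f := by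
    filter_upwards [hf.eventually_differentiableAt] with y hy using pdr_eq_dirDeriv hy
  have h2 : pdz f =ᶠ[𝓝 x] dirDeriv (0, 1) f := by
    filter_upwards [hf.eventually_differentiableAt] with y hy using pdz_eq_dirDeriv hy
  have d1 : DifferentiableAt ℝ (pdr f) x :=
    ((hf.dirDeriv_one _).differentiableAt (by norm_num)).congr_of_eventuallyEq h1
  have d2 : DifferentiableAt ℝ (pdz f) x :=
    ((hf.dirDeriv_one _).differentiableAt (by norm_num)).congr_of_eventuallyEq h2
  rw [pdr_eq_dirDeriv d1, pdz_eq_dirDeriv d2, h1.dirDeriv_eq, h2.dirDeriv_eq, planeLaplacian]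

/-- A primitive vanishing to second order at `0`, cut off to the positive half-line. -/
lemma hasDerivAt_comp_max_zero {T T₁ : ℝ → ℝ} (hT : ∀ s, 0 ≤ s → HasDerivAt T (T₁ s) s)
    (h0 : T₁ 0 = 0) (s : ℝ) :
    HasDerivAt (fun t => T (max t 0)) (T₁ (max s 0)) s := by
  rcases lt_trichotomy s 0 with hs | rfl | hs
  · rw [max_eq_right hs.le, h0]
    refine (hasDerivAt_const s (T 0)).congr_of_eventuallyEq ?_
    filter_upwards [gt_mem_nhds hs] with t ht
    rw [max_eq_right ht.le]
  · rw [max_self, h0]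
    have hl : HasDerivWithinAt (fun t => T (max t 0)) 0 (Iic 0) 0 :=
      (hasDerivWithinAt_const (0 : ℝ) (Iic 0) (T 0)).congr
        (fun t ht => by rw [max_eq_right (mem_Iic.1 ht)]) (by simp)
    have hr : HasDerivWithinAt (fun t => T (max t 0)) 0 (Ici 0) 0 := by
      have := hT 0 le_rfl
      rw [h0] at this
      exact this.hasDerivWithinAt.congr
        (fun t ht => by rw [max_eq_left (mem_Ici.1 ht)]) (by simp)
    simpa using hl.union hr
  · rw [max_eq_left hs.le]
    refine (hT s hs.le).congr_of_eventuallyEq ?_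
    filter_upwards [lt_mem_nhds hs] with t ht
    rw [max_eq_left ht.le]

lemma contDiff_two_of_hasDerivAt {T T₁ T₂ : ℝ → ℝ} (hT : ∀ s, HasDerivAt T (T₁ s) s)
    (hT₁ : ∀ s, HasDerivAt T₁ (T₂ s) s) (hT₂ : Continuous T₂) : ContDiff ℝ 2 T := by
  have h1 : deriv T = T₁ := funext fun s => (hT s).deriv
  have h2 : deriv T₁ = T₂ := funext fun s => (hT₁ s).deriv
  have hc : ContDiff ℝ 1 T₁ := by
    rw [contDiff_one_iff_deriv, h2]
    exact ⟨fun s => (hT₁ s).differentiableAt, hT₂⟩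
  rw [show (2 : WithTop ℕ∞) = 1 + 1 by norm_num, contDiff_succ_iff_deriv, h1]
  exact ⟨fun s => (hT s).differentiableAt, by simp, hc⟩

end Calculus

/-- The positive part of the cube. -/
lemma hasDerivAt_max_pow_three (s : ℝ) :
    HasDerivAt (fun t : ℝ => max t 0 ^ 3) (3 * max s 0 ^ 2) s :=
  hasDerivAt_comp_max_zero (T := fun t => t ^ 3) (T₁ := fun t => 3 * t ^ 2)
    (fun s _ => by simpa using hasDerivAt_pow 3 s) (by norm_num) s

lemma hasDerivAt_three_mul_max_sq (s : ℝ) :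
    HasDerivAt (fun t : ℝ => 3 * max t 0 ^ 2) (6 * max s 0) s :=
  hasDerivAt_comp_max_zero (T := fun t => 3 * t ^ 2) (T₁ := fun t => 6 * t)
    (fun s _ => ((hasDerivAt_pow 2 s).const_mul 3).congr_deriv (by push_cast; ring))
    (by norm_num) s

/-- A `C²` convex regularisation of the positive part, of linear growth. -/
def softPos (s : ℝ) : ℝ := max s 0 - arctan (max s 0)

lemma hasDerivAt_softPos (s : ℝ) :
    HasDerivAt softPos (max s 0 ^ 2 / (1 + max s 0 ^ 2)) s :=
  hasDerivAt_comp_max_zero (T := fun t => t - arctan t) (T₁ := fun t => t ^ 2 / (1 + t ^ 2))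
    (fun s _ => by
      have h : (1 + s ^ 2) ≠ 0 := by positivity
      have := (hasDerivAt_id' s).fun_sub (hasDerivAt_arctan s)
      rwa [show 1 - 1 / (1 + s ^ 2) = s ^ 2 / (1 + s ^ 2) by field_simp; ring] at this) (by norm_num) s

lemma hasDerivAt_deriv_softPos (s : ℝ) :
    HasDerivAt (fun t : ℝ => max t 0 ^ 2 / (1 + max t 0 ^ 2))
      (2 * max s 0 / (1 + max s 0 ^ 2) ^ 2) s :=
  hasDerivAt_comp_max_zero (T := fun t => t ^ 2 / (1 + t ^ 2))
    (T₁ := fun t => 2 * t / (1 + t ^ 2) ^ 2)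
    (fun s _ => by
      have h : (1 + s ^ 2) ≠ 0 := by positivity
      refine ((hasDerivAt_pow 2 s).fun_div ((hasDerivAt_pow 2 s).const_add 1) h).congr_deriv ?_
      congr 1
      push_cast
      ring) (by norm_num) s

lemma contDiff_softPos : ContDiff ℝ 2 softPos :=
  contDiff_two_of_hasDerivAt hasDerivAt_softPos hasDerivAt_deriv_softPos
    (Continuous.div (by fun_prop) (by fun_prop) fun s => by positivity)

lemma softPos_of_nonpos {s : ℝ} (hs : s ≤ 0) : softPos s = 0 := by
  simp [softPos, max_eq_right hs]

lemma softPos_le (s : ℝ) : softPos s ≤ max s 0 := by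
  have : 0 ≤ arctan (max s 0) := arctan_nonneg.2 (le_max_right s 0)
  unfold softPos
  linarith

lemma softPos_pos {s : ℝ} (hs : 0 < s) : 0 < softPos s := by
  have := lt_tan (arctan_pos.2 hs) (arctan_lt_pi_div_two s)
  rw [tan_arctan] at this
  rw [softPos, max_eq_left hs.le]
  linarith

lemma softPos_nonneg (s : ℝ) : 0 ≤ softPos s := by
  rcases le_or_gt s 0 with hs | hs
  · exact (softPos_of_nonpos hs).ge
  · exact (softPos_pos hs).le

lemma integrable_dirDeriv_and_integral_eq_zero {X : ℝ × ℝ → ℝ} (hX : ContDiff ℝ 1 X)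
    (hc : HasCompactSupport X) (v : ℝ × ℝ) :
    Integrable (dirDeriv v X) ∧ ∫ x, dirDeriv v X x = 0 := by
  have hcont : Continuous (dirDeriv v X) :=
    (hX.continuous_fderiv (by norm_num)).clm_apply continuous_const
  have hInt : Integrable (dirDeriv v X) :=
    hcont.integrable_of_hasCompactSupport (hc.fderiv_apply (𝕜 := ℝ) v)
  refine ⟨hInt, ?_⟩
  have h := integral_mul_fderiv_eq_neg_fderiv_mul_of_integrable (𝕜 := ℝ)
    (μ := (volume : Measure (ℝ × ℝ))) (f := fun _ => (1 : ℝ)) (g := X) (v := v)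
    (by simp) (by simp only [one_mul]; exact hInt)
    (by simpa using hX.continuous.integrable_of_hasCompactSupport hc)
    (fun x _ => differentiableAt_const _) (fun x _ => hX.differentiable (by norm_num) x)
  simpa [dirDeriv] using h

section Green

variable {U K : Set (ℝ × ℝ)} {W η : ℝ × ℝ → ℝ}

lemma integrableOn_and_setIntegral_mul_dirDeriv_dirDeriv_sub (hU : IsOpen U) (hK : IsCompact K)
    (hKU : K ⊆ U) (hW : ContDiffOn ℝ 2 W U) (hη : ContDiffOn ℝ 2 η U)
    (h0 : ∀ x ∈ U \ K, W =ᶠ[𝓝 x] 0 ∨ η =ᶠ[𝓝 x] 0) (v : ℝ × ℝ) :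
    IntegrableOn (fun x => W x * dirDeriv v (dirDeriv v η) x -
        η x * dirDeriv v (dirDeriv v W) x) U ∧
      ∫ x in U, (W x * dirDeriv v (dirDeriv v η) x - η x * dirDeriv v (dirDeriv v W) x) = 0 := by
  set Y : ℝ × ℝ → ℝ := fun x => W x * dirDeriv v η x - η x * dirDeriv v W x with hY
  set X : ℝ × ℝ → ℝ := U.indicator Y with hXdef
  have hWat : ∀ x ∈ U, ContDiffAt ℝ 2 W x := fun x hx => hW.contDiffAt (hU.mem_nhds hx)
  have hηat : ∀ x ∈ U, ContDiffAt ℝ 2 η x := fun x hx => hη.contDiffAt (hU.mem_nhds hx)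
  have hXY : ∀ x ∈ U, X =ᶠ[𝓝 x] Y := fun x hx => by
    filter_upwards [hU.mem_nhds hx] with y hy using indicator_of_mem hy _
  have hXK : ∀ x ∉ K, X x = 0 := by
    intro x hx
    by_cases hxU : x ∈ U
    · rw [hXdef, indicator_of_mem hxU, hY]
      rcases h0 x ⟨hxU, hx⟩ with h | h
      · have h1 := h.dirDeriv_eq v
        have h2 := h.eq_of_nhds
        have h3 : dirDeriv v (0 : ℝ × ℝ → ℝ) x = 0 := dirDeriv_const 0
        simp [h1, h2, h3]
      · have h1 := h.dirDeriv_eq v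
        have h2 := h.eq_of_nhds
        have h3 : dirDeriv v (0 : ℝ × ℝ → ℝ) x = 0 := dirDeriv_const 0
        simp [h1, h2, h3]
    · exact indicator_of_notMem hxU _
  have hXK' : ∀ x ∉ K, X =ᶠ[𝓝 x] fun _ => 0 := fun x hx => by
    filter_upwards [hK.isClosed.isOpen_compl.mem_nhds hx] with y hy using hXK y hy
  have hXc : HasCompactSupport X := HasCompactSupport.intro hK hXK
  have hXd : ContDiff ℝ 1 X := by
    rw [contDiff_iff_contDiffAt]
    intro x
    by_cases hx : x ∈ U
    · refine ContDiffAt.congr_of_eventuallyEq ?_ (hXY x hx)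
      exact (((hWat x hx).of_le (by norm_num)).mul ((hηat x hx).dirDeriv_one v)).sub
        (((hηat x hx).of_le (by norm_num)).mul ((hWat x hx).dirDeriv_one v))
    · exact contDiffAt_const.congr_of_eventuallyEq (hXK' x fun h => hx (hKU h))
  have hDU : ∀ x ∈ U, dirDeriv v X x =
      W x * dirDeriv v (dirDeriv v η) x - η x * dirDeriv v (dirDeriv v W) x := by
    intro x hx
    have w1 := (hWat x hx).differentiableAt (by norm_num)
    have e1 := (hηat x hx).differentiableAt (by norm_num)
    have w2 := ((hWat x hx).dirDeriv_one v).differentiableAt (by norm_num)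
    have e2 := ((hηat x hx).dirDeriv_one v).differentiableAt (by norm_num)
    rw [(hXY x hx).dirDeriv_eq v, hY, dirDeriv_sub (w1.fun_mul e2) (e1.fun_mul w2),
      dirDeriv_mul w1 e2, dirDeriv_mul e1 w2]
    ring
  have hDc : ∀ x ∉ U, dirDeriv v X x = 0 := fun x hx => by
    rw [(hXK' x fun h => hx (hKU h)).dirDeriv_eq v, dirDeriv_const]
  obtain ⟨hi, hz⟩ := integrable_dirDeriv_and_integral_eq_zero hXd hXc v
  refine ⟨hi.integrableOn.congr_fun hDU hU.measurableSet, ?_⟩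
  rw [← setIntegral_congr_fun hU.measurableSet hDU,
    setIntegral_eq_integral_of_forall_compl_eq_zero hDc, hz]

/-- Green's second identity for a pair of functions one of which vanishes near each point
outside a compact subset of `U`. -/
lemma integrableOn_and_setIntegral_green (hU : IsOpen U) (hK : IsCompact K)
    (hKU : K ⊆ U) (hW : ContDiffOn ℝ 2 W U) (hη : ContDiffOn ℝ 2 η U)
    (h0 : ∀ x ∈ U \ K, W =ᶠ[𝓝 x] 0 ∨ η =ᶠ[𝓝 x] 0) :
    IntegrableOn (fun x => W x * planeLaplacian η x - η x * planeLaplacian W x) U ∧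
      ∫ x in U, (W x * planeLaplacian η x - η x * planeLaplacian W x) = 0 := by
  obtain ⟨i1, z1⟩ :=
    integrableOn_and_setIntegral_mul_dirDeriv_dirDeriv_sub hU hK hKU hW hη h0 (1, 0)
  obtain ⟨i2, z2⟩ :=
    integrableOn_and_setIntegral_mul_dirDeriv_dirDeriv_sub hU hK hKU hW hη h0 (0, 1)
  have he : (fun x => W x * planeLaplacian η x - η x * planeLaplacian W x) = fun x =>
      (W x * dirDeriv (1, 0) (dirDeriv (1, 0) η) x - η x * dirDeriv (1, 0) (dirDeriv (1, 0) W) x) +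
      (W x * dirDeriv (0, 1) (dirDeriv (0, 1) η) x -
        η x * dirDeriv (0, 1) (dirDeriv (0, 1) W) x) := by
    funext x
    simp only [planeLaplacian]
    ring
  rw [he]
  exact ⟨i1.add i2, by rw [integral_add i1 i2, z1, z2, add_zero]⟩

end Green

lemma exists_quadratic_remainder_bound {φ : ℝ → ℝ} (hφ : ContDiff ℝ 2 φ) (t₀ : ℝ) :
    ∃ K : ℝ, 1 ≤ K ∧ ∀ t, |t - t₀| ≤ 1 →
      |φ t - φ t₀ - deriv φ t₀ * (t - t₀)| ≤ K * (t - t₀) ^ 2 := by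
  have hφ1 : ContDiff ℝ 1 (deriv φ) := by
    have : ContDiff ℝ (1 + 1) φ := by norm_num; exact hφ
    exact (contDiff_succ_iff_deriv.1 this).2.2
  have hc : Continuous (deriv (deriv φ)) := hφ1.continuous_deriv (by norm_num)
  obtain ⟨C, hC⟩ := (isCompact_closedBall t₀ 1).exists_bound_of_continuousOn hc.continuousOn
  refine ⟨max C 1, le_max_right _ _, fun t ht => ?_⟩
  have hlip : ∀ s, |s - t₀| ≤ 1 → |deriv φ s - deriv φ t₀| ≤ max C 1 * |s - t₀| := by
    intro s hs
    have := (convex_closedBall t₀ 1).norm_image_sub_le_of_norm_deriv_le (f := deriv φ)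
      (C := max C 1) (fun y _ => hφ1.differentiable (by norm_num) y)
      (fun y hy => (hC y hy).trans (le_max_left _ _))
      (Metric.mem_closedBall_self zero_le_one) (show s ∈ Metric.closedBall t₀ 1 from hs)
    simpa using this
  have hd : ∀ s, HasDerivAt (fun s => φ s - deriv φ t₀ * (s - t₀)) (deriv φ s - deriv φ t₀) s := by
    intro s
    have h1 := (hφ.differentiable (by norm_num) s).hasDerivAt
    have h2 := ((hasDerivAt_id' s).sub_const t₀).const_mul (deriv φ t₀)
    simpa using h1.fun_sub h2
  have := (convex_closedBall t₀ |t - t₀|).norm_image_sub_le_of_norm_deriv_le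
    (f := fun s => φ s - deriv φ t₀ * (s - t₀)) (C := max C 1 * |t - t₀|)
    (fun y _ => (hd y).differentiableAt)
    (fun y hy => by
      rw [(hd y).deriv]
      have hy' : |y - t₀| ≤ |t - t₀| := hy
      refine (hlip y (hy'.trans ht)).trans ?_
      gcongr)
    (Metric.mem_closedBall_self (abs_nonneg _))
    (show t ∈ Metric.closedBall t₀ |t - t₀| by simp [Real.dist_eq])
  simp only [sub_self, mul_zero, sub_zero, norm_eq_abs] at this
  calc |φ t - φ t₀ - deriv φ t₀ * (t - t₀)| = |φ t - deriv φ t₀ * (t - t₀) - φ t₀| := by ring_nf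
    _ ≤ _ := this
    _ = max C 1 * (t - t₀) ^ 2 := by rw [mul_assoc, ← sq, sq_abs]

/-- The linear functional `x ↦ α · (x - a)`. -/
def linAt (a α x : ℝ × ℝ) : ℝ := α.1 * (x.1 - a.1) + α.2 * (x.2 - a.2)

/-- The quadratic function `σℓ + 2Kξ² - 3Kℓ²`, where `ξ = α · (x - a)` and `ℓ = β · (x - a)`. -/
def quadBarrier (σ K : ℝ) (a α β x : ℝ × ℝ) : ℝ :=
  σ * linAt a β x + 2 * K * linAt a α x ^ 2 - 3 * K * linAt a β x ^ 2

section Quad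

variable (σ K : ℝ) (a α β x : ℝ × ℝ)

lemma contDiff_linAt : ContDiff ℝ 2 (linAt a α) := by
  unfold linAt
  fun_prop

lemma contDiff_quadBarrier : ContDiff ℝ 2 (quadBarrier σ K a α β) := by
  unfold quadBarrier linAt
  fun_prop

lemma dirDeriv_linAt (v : ℝ × ℝ) : dirDeriv v (linAt a α) x = α.1 * v.1 + α.2 * v.2 := by
  have h : HasFDerivAt (linAt a α)
      (α.1 • ContinuousLinearMap.fst ℝ ℝ ℝ + α.2 • ContinuousLinearMap.snd ℝ ℝ ℝ) x :=
    ((hasFDerivAt_fst.sub_const a.1).const_mul α.1).add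
      ((hasFDerivAt_snd.sub_const a.2).const_mul α.2)
  simp [dirDeriv, h.fderiv]

lemma dirDeriv_quadBarrier (v : ℝ × ℝ) : dirDeriv v (quadBarrier σ K a α β) x =
    (σ - 6 * K * linAt a β x) * (β.1 * v.1 + β.2 * v.2) +
      4 * K * linAt a α x * (α.1 * v.1 + α.2 * v.2) := by
  have hα := (contDiff_linAt a α).differentiable (by norm_num) x
  have hβ := (contDiff_linAt a β).differentiable (by norm_num) x
  have h := (((hβ.hasFDerivAt.const_mul σ).add ((hα.hasFDerivAt.pow 2).const_mul (2 * K))).sub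
    ((hβ.hasFDerivAt.pow 2).const_mul (3 * K))).fderiv
  have h1 := dirDeriv_linAt a α x v
  have h2 := dirDeriv_linAt a β x v
  simp only [dirDeriv] at h1 h2 ⊢
  erw [h]
  simp [h1, h2]
  ring

lemma planeLaplacian_quadBarrier : planeLaplacian (quadBarrier σ K a α β) x =
    4 * K * (α.1 ^ 2 + α.2 ^ 2) - 6 * K * (β.1 ^ 2 + β.2 ^ 2) := by
  have key : ∀ v, dirDeriv v (dirDeriv v (quadBarrier σ K a α β)) x =
      4 * K * (α.1 * v.1 + α.2 * v.2) ^ 2 - 6 * K * (β.1 * v.1 + β.2 * v.2) ^ 2 := by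
    intro v
    rw [funext fun y => dirDeriv_quadBarrier σ K a α β y v]
    have hα := (contDiff_linAt a α).differentiable (by norm_num) x
    have hβ := (contDiff_linAt a β).differentiable (by norm_num) x
    have h := ((((hβ.hasFDerivAt.const_mul (6 * K)).const_sub σ).mul_const
      (β.1 * v.1 + β.2 * v.2)).add ((hα.hasFDerivAt.const_mul (4 * K)).mul_const
      (α.1 * v.1 + α.2 * v.2))).fderiv
    have h1 := dirDeriv_linAt a α x v
    have h2 := dirDeriv_linAt a β x v
    simp only [dirDeriv] at h1 h2 ⊢
    erw [h]
    simp [h1, h2]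
    ring
  simp only [planeLaplacian, key]
  ring

end Quad

lemma abs_linAt_le (a α x : ℝ × ℝ) : |linAt a α x| ≤ (|α.1| + |α.2|) * ‖x - a‖ := by
  have h1 : |x.1 - a.1| ≤ ‖x - a‖ := norm_fst_le (x - a)
  have h2 : |x.2 - a.2| ≤ ‖x - a‖ := norm_snd_le (x - a)
  calc |linAt a α x| ≤ |α.1 * (x.1 - a.1)| + |α.2 * (x.2 - a.2)| := abs_add_le _ _
    _ ≤ |α.1| * ‖x - a‖ + |α.2| * ‖x - a‖ := by
        rw [abs_mul, abs_mul]
        gcongr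
    _ = _ := by ring

/-- Lower bounds of the quadratic barrier above the parabola `σℓ = -Kξ²`, near its vertex. -/
lemma quadBarrier_lower_bound {σ K : ℝ} {a α β x : ℝ × ℝ} (hσ : σ = 1 ∨ σ = -1) (hK : 1 ≤ K)
    (hsmall : 6 * K * |linAt a β x| ≤ 1) (hside : -(K * linAt a α x ^ 2) < σ * linAt a β x) :
    0 < quadBarrier σ K a α β x ∧ |linAt a β x| / 2 ≤ quadBarrier σ K a α β x ∧
      linAt a α x ^ 2 / 2 ≤ quadBarrier σ K a α β x := by
  unfold quadBarrier
  set l := linAt a β x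
  set ξ := linAt a α x
  have hσl : |σ * l| = |l| := by rcases hσ with rfl | rfl <;> simp
  have hl2 : l ^ 2 = |l| ^ 2 := (sq_abs l).symm
  have hξ : ξ ^ 2 ≤ K * ξ ^ 2 := le_mul_of_one_le_left (sq_nonneg ξ) hK
  have h3 : 3 * K * l ^ 2 ≤ |l| / 2 := by
    rw [hl2]
    nlinarith [abs_nonneg l]
  have hξ0 := sq_nonneg ξ
  have hl0 := abs_nonneg l
  rcases le_or_gt 0 (σ * l) with h | h
  · rw [abs_of_nonneg h] at hσl
    exact ⟨by linarith, by linarith, by linarith⟩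
  · rw [abs_of_neg h] at hσl
    exact ⟨by linarith, by linarith, by linarith⟩

lemma euclDist_le_two_mul_norm (x y : ℝ × ℝ) : euclDist x y ≤ 2 * ‖x - y‖ := by
  have h1 : |x.1 - y.1| ≤ ‖x - y‖ := norm_fst_le (x - y)
  have h2 : |x.2 - y.2| ≤ ‖x - y‖ := norm_snd_le (x - y)
  refine Real.sqrt_le_iff.2 ⟨by positivity, ?_⟩
  have h3 := sq_le_sq' (abs_le.1 h1).1 (abs_le.1 h1).2
  have h4 := sq_le_sq' (abs_le.1 h2).1 (abs_le.1 h2).2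
  nlinarith [sq_nonneg ‖x - y‖]

lemma norm_sq_le_sq_add_sq (x : ℝ × ℝ) : ‖x‖ ^ 2 ≤ x.1 ^ 2 + x.2 ^ 2 := by
  rw [Prod.norm_def]
  rcases max_choice ‖x.1‖ ‖x.2‖ with h | h <;> rw [h, norm_eq_abs, sq_abs] <;>
    nlinarith [sq_nonneg x.1, sq_nonneg x.2]

/-- Near a boundary point at which the boundary is a `C²` graph, each side of the boundary lies
above a parabola. -/
lemma exists_parabola_sides {U : Set (ℝ × ℝ)} (hUo : IsOpen U) {a : ℝ × ℝ} (ha : a ∈ frontier U)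
    {θ : ℝ} {φ : ℝ → ℝ} {ε : ℝ} (hε : 0 < ε) (hφ : ContDiff ℝ 2 φ)
    (hgraph : ∀ y : ℝ × ℝ, euclDist y a < ε →
      (y ∈ frontier U ↔ (rotPlane θ y).2 = φ ((rotPlane θ y).1))) {ρ : ℝ} (hρ : 0 < ρ) :
    ∃ (α β : ℝ × ℝ) (K r L : ℝ) (S : ℝ × ℝ → ℝ), α.1 ^ 2 + α.2 ^ 2 = 1 ∧
      1 ≤ β.1 ^ 2 + β.2 ^ 2 ∧ 1 ≤ K ∧ 0 < r ∧ r ≤ ρ ∧ 0 < L ∧ Continuous S ∧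
      (∀ x, ‖x - a‖ ^ 2 ≤ L * (linAt a α x ^ 2 + linAt a β x ^ 2)) ∧
      ∀ x, ‖x - a‖ < r → 6 * K * |linAt a β x| ≤ 1 ∧ (x ∈ U → S x ≠ 0 ∧
        ∀ σ : ℝ, (σ = 1 ∨ σ = -1) → 0 < σ * S x →
          -(K * linAt a α x ^ 2) < σ * linAt a β x) := by
  have ha' : (rotPlane θ a).2 = φ ((rotPlane θ a).1) := by
    refine (hgraph a ?_).1 ha
    simpa [euclDist] using hε
  set t₀ := (rotPlane θ a).1 with ht₀
  obtain ⟨K, hK1, hK⟩ := exists_quadratic_remainder_bound hφ t₀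
  set m := deriv φ t₀
  have hcs := Real.cos_sq_add_sin_sq θ
  set α : ℝ × ℝ := (cos θ, -sin θ) with hα
  set β : ℝ × ℝ := (sin θ - m * cos θ, cos θ + m * sin θ) with hβ
  have hξ : ∀ x, linAt a α x = (rotPlane θ x).1 - t₀ := fun x => by
    simp only [linAt, hα, ht₀, rotPlane]
    ring
  have hl : ∀ x, linAt a β x = (rotPlane θ x).2 - φ t₀ - m * ((rotPlane θ x).1 - t₀) := fun x => by
    rw [← ha']
    simp only [linAt, hβ, ht₀, rotPlane]
    ring
  set B := |β.1| + |β.2| with hB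
  have hB0 : 0 ≤ B := by positivity
  have hA : |α.1| + |α.2| ≤ 2 := by
    have h1 := Real.abs_cos_le_one θ
    have h2 := Real.abs_sin_le_one θ
    simp only [hα, abs_neg]
    linarith
  set r := min ρ (min (ε / 2) (min (1 / 2) (1 / (6 * K * (B + 1))))) with hr
  have hK0 : 0 < K := by linarith
  refine ⟨α, β, K, r, 2 + 2 * m ^ 2, fun x => (rotPlane θ x).2 - φ ((rotPlane θ x).1), ?_, ?_, hK1,
    ?_, min_le_left _ _, by positivity, ?_, ?_, ?_⟩
  · simp only [hα]
    linarith
  · have : (sin θ - m * cos θ) ^ 2 + (cos θ + m * sin θ) ^ 2 = 1 + m ^ 2 := by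
      linear_combination (1 + m ^ 2) * hcs
    simp only [hβ, this]
    nlinarith [sq_nonneg m]
  · simp only [hr, lt_min_iff]
    refine ⟨hρ, by positivity, by norm_num, by positivity⟩
  · have := hφ.continuous
    unfold rotPlane
    fun_prop
  · intro x
    have h1 : ‖x - a‖ ^ 2 ≤ linAt a α x ^ 2 + (linAt a β x + m * linAt a α x) ^ 2 := by
      refine (norm_sq_le_sq_add_sq (x - a)).trans (le_of_eq ?_)
      simp only [linAt, hα, hβ, Prod.fst_sub, Prod.snd_sub]
      linear_combination (-(x.1 - a.1) ^ 2 - (x.2 - a.2) ^ 2) * hcs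
    nlinarith [sq_nonneg (linAt a β x - m * linAt a α x), sq_nonneg (linAt a α x),
      sq_nonneg (m * linAt a β x)]
  · intro x hx
    simp only [hr, lt_min_iff] at hx
    obtain ⟨-, hxε, hx1, hxK⟩ := hx
    have hlB : |linAt a β x| ≤ (B + 1) * ‖x - a‖ :=
      (abs_linAt_le a β x).trans
        (mul_le_mul_of_nonneg_right (by linarith) (norm_nonneg _))
    have hxξ : |(rotPlane θ x).1 - t₀| ≤ 1 := by
      rw [← hξ]
      refine (abs_linAt_le a α x).trans ?_
      nlinarith [norm_nonneg (x - a)]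
    refine ⟨?_, fun hxU => ⟨fun h0 => ?_, ?_⟩⟩
    · rw [lt_div_iff₀ (by positivity)] at hxK
      calc 6 * K * |linAt a β x| ≤ 6 * K * ((B + 1) * ‖x - a‖) := by gcongr
        _ ≤ 1 := by linarith
    · have hfr : x ∈ frontier U := by
        refine (hgraph x ((euclDist_le_two_mul_norm x a).trans_lt (by linarith))).2 ?_
        linarith
      rw [hUo.frontier_eq] at hfr
      exact hfr.2 hxU
    · have hT := abs_le.1 (hK _ hxξ)
      rintro σ (rfl | rfl) hs
      · rw [hξ, hl]
        linarith [hT.1]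
      · rw [hξ, hl]
        linarith [hT.2]

set_option maxHeartbeats 1000000 in
/-- A local subharmonic function near a boundary point `a`, equal to `1` at `a`. -/
lemma exists_local_barrier {U : Set (ℝ × ℝ)} (hUo : IsOpen U) {a : ℝ × ℝ} (ha : a ∈ frontier U)
    {θ : ℝ} {φ : ℝ → ℝ} {ε : ℝ} (hε : 0 < ε) (hφ : ContDiff ℝ 2 φ)
    (hgraph : ∀ y : ℝ × ℝ, euclDist y a < ε →
      (y ∈ frontier U ↔ (rotPlane θ y).2 = φ ((rotPlane θ y).1))) {ρ : ℝ} (hρ : 0 < ρ) :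
    ∃ (b : ℝ × ℝ → ℝ) (C : ℝ), 0 < C ∧ ContDiffOn ℝ 2 b U ∧ ∀ x ∈ U, 0 ≤ b x ∧ b x < 1 ∧
      (ρ ≤ ‖x - a‖ → b x = 0) ∧ 1 - b x ≤ C * ‖x - a‖ ∧
      ∀ v : ℝ × ℝ, ‖v‖ ≤ 1 → |dirDeriv v b x| ≤ C ∧
        |dirDeriv v b x| ≤ C * planeLaplacian b x := by
  obtain ⟨α, β, K, r, L, S, hα, hβ, hK, hr, hrρ, hL, hS, hcoer, hnear⟩ :=
    exists_parabola_sides hUo ha hε hφ hgraph hρ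
  set ψ : ℝ → ℝ × ℝ → ℝ := fun σ => quadBarrier σ K a α β with hψ
  set c := r ^ 2 / (16 * L) with hc
  have hc0 : 0 < c := by positivity
  have hlow : ∀ x ∈ U, ‖x - a‖ < r → ∀ σ : ℝ, (σ = 1 ∨ σ = -1) → 0 < σ * S x →
      0 < ψ σ x ∧ (r / 2 < ‖x - a‖ → c ≤ ψ σ x) := by
    intro x hxU hx σ hσ hs
    obtain ⟨h6, h2⟩ := hnear x hx
    obtain ⟨h0, hl, hξ⟩ := quadBarrier_lower_bound hσ hK h6 ((h2 hxU).2 σ hσ hs)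
    refine ⟨h0, fun hx2 => ?_⟩
    by_contra! hlt
    have hl1 : |linAt a β x| ≤ 1 := by nlinarith [abs_nonneg (linAt a β x)]
    have hl2 : linAt a β x ^ 2 ≤ |linAt a β x| := by
      rw [← sq_abs]
      nlinarith [abs_nonneg (linAt a β x)]
    simp only [hψ] at hlt
    have h3 : linAt a α x ^ 2 + linAt a β x ^ 2 < 4 * c := by linarith
    have h4 := hcoer x
    have h5 : L * (4 * c) = r ^ 2 / 4 := by
      rw [hc]
      field_simp
      ring
    have h6 := mul_lt_mul_of_pos_left h3 hL
    nlinarith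
  set A := |α.1| + |α.2| with hA
  set B := |β.1| + |β.2| with hB
  have hA0 : 0 ≤ A := by positivity
  have hB0 : 0 ≤ B := by positivity
  set G := 2 * B + 4 * K * A ^ 2 * r with hG
  have hK0 : 0 < K := by linarith
  have hG0 : 0 ≤ G := by positivity
  have hup : ∀ x, ‖x - a‖ < r → ∀ σ : ℝ, (σ = 1 ∨ σ = -1) → ψ σ x ≤ G * ‖x - a‖ ∧
      ∀ v : ℝ × ℝ, ‖v‖ ≤ 1 → |dirDeriv v (ψ σ) x| ≤ G := by
    intro x hx σ hσ
    have hξ := abs_linAt_le a α x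
    have hl := abs_linAt_le a β x
    rw [← hA] at hξ
    rw [← hB] at hl
    have hn := norm_nonneg (x - a)
    have hσ1 : |σ| = 1 := by rcases hσ with rfl | rfl <;> simp
    constructor
    · have h1 : σ * linAt a β x ≤ |linAt a β x| := by
        refine (le_abs_self _).trans ?_
        rw [abs_mul, hσ1, one_mul]
      have h2 : linAt a α x ^ 2 ≤ A ^ 2 * r * ‖x - a‖ := by
        rw [← sq_abs]
        calc |linAt a α x| ^ 2 ≤ (A * ‖x - a‖) ^ 2 := by gcongr
          _ = A ^ 2 * ‖x - a‖ * ‖x - a‖ := by ring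
          _ ≤ _ := by gcongr
      have h3 : 2 * K * linAt a α x ^ 2 ≤ 2 * K * (A ^ 2 * r * ‖x - a‖) := by gcongr
      have h4 : 0 ≤ 3 * K * linAt a β x ^ 2 := by positivity
      have h5 : 0 ≤ 2 * K * (A ^ 2 * r * ‖x - a‖) := by positivity
      have h6 : 0 ≤ B * ‖x - a‖ := by positivity
      simp only [hψ, quadBarrier, hG]
      linarith
    · intro v hv
      have hv1 : |v.1| ≤ 1 := (norm_fst_le v).trans hv
      have hv2 : |v.2| ≤ 1 := (norm_snd_le v).trans hv
      have hpair : ∀ w : ℝ × ℝ, |w.1 * v.1 + w.2 * v.2| ≤ |w.1| + |w.2| := fun w => by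
        refine (abs_add_le _ _).trans ?_
        rw [abs_mul, abs_mul]
        nlinarith [abs_nonneg w.1, abs_nonneg w.2]
      simp only [hψ, dirDeriv_quadBarrier]
      have h1 : |σ - 6 * K * linAt a β x| ≤ 2 := by
        refine (abs_sub _ _).trans ?_
        rw [hσ1, abs_mul, abs_of_pos (by positivity : 0 < 6 * K)]
        linarith [(hnear x hx).1]
      have h2 : |linAt a α x| ≤ A * r := hξ.trans (by gcongr)
      calc _ ≤ |σ - 6 * K * linAt a β x| * |β.1 * v.1 + β.2 * v.2| +
            4 * K * |linAt a α x| * |α.1 * v.1 + α.2 * v.2| := by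
            refine (abs_add_le _ _).trans (le_of_eq ?_)
            rw [abs_mul, abs_mul, abs_mul, abs_of_pos (by positivity : 0 < 4 * K)]
        _ ≤ 2 * B + 4 * K * (A * r) * A := by
            gcongr
            · exact hpair β
            · exact hpair α
        _ = G := by rw [hG]; ring
  set T : ℝ → ℝ := fun s => max (1 - s / c) 0 ^ 3 with hT
  set T₁ : ℝ → ℝ := fun s => 3 * max (1 - s / c) 0 ^ 2 * (-(1 / c)) with hT₁
  set T₂ : ℝ → ℝ := fun s => 6 * max (1 - s / c) 0 * (-(1 / c)) * (-(1 / c)) with hT₂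
  have hin : ∀ s, HasDerivAt (fun s : ℝ => 1 - s / c) (-(1 / c)) s := fun s => by
    simpa using ((hasDerivAt_id' s).div_const c).const_sub 1
  have hTd : ∀ s, HasDerivAt T (T₁ s) s := fun s =>
    (hasDerivAt_max_pow_three _).comp s (hin s)
  have hTd₁ : ∀ s, HasDerivAt T₁ (T₂ s) s := fun s =>
    ((hasDerivAt_three_mul_max_sq _).comp s (hin s)).mul_const _
  have hTc : ContDiff ℝ 2 T := contDiff_two_of_hasDerivAt hTd hTd₁ (by fun_prop)
  set b : ℝ × ℝ → ℝ := fun x =>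
    if ‖x - a‖ < r then T (ψ (if 0 < S x then 1 else -1) x) else 0 with hb
  have hnc : Continuous fun y : ℝ × ℝ => ‖y - a‖ := by fun_prop
  have hinner : ∀ x ∈ U, ‖x - a‖ < r → ∃ σ : ℝ, (σ = 1 ∨ σ = -1) ∧ 0 < σ * S x ∧
      b =ᶠ[𝓝 x] fun y => T (ψ σ y) := by
    intro x hxU hx
    have hball : ∀ᶠ y in 𝓝 x, ‖y - a‖ < r := hnc.continuousAt.eventually_lt_const hx
    rcases lt_or_gt_of_ne ((hnear x hx).2 hxU).1 with h | h
    · refine ⟨-1, Or.inr rfl, by linarith, ?_⟩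
      filter_upwards [hball, hS.continuousAt.eventually_lt_const h] with y hy hy'
      simp only [hb, if_pos hy, if_neg hy'.not_gt]
    · refine ⟨1, Or.inl rfl, by linarith, ?_⟩
      filter_upwards [hball, hS.continuousAt.eventually_const_lt h] with y hy hy'
      simp only [hb, if_pos hy, if_pos hy']
  have houter : ∀ x ∈ U, r / 2 < ‖x - a‖ → b =ᶠ[𝓝 x] fun _ => 0 := by
    intro x hxU hx
    filter_upwards [hnc.continuousAt.eventually_const_lt hx, hUo.mem_nhds hxU] with y hy hyU
    by_cases hyr : ‖y - a‖ < r
    · have hmain : ∀ σ : ℝ, (σ = 1 ∨ σ = -1) → 0 < σ * S y → T (ψ σ y) = 0 := by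
        intro σ hσ hs
        have := (hlow y hyU hyr σ hσ hs).2 hy
        have h1 : 1 - ψ σ y / c ≤ 0 := by
          rw [sub_nonpos, le_div_iff₀ hc0]
          linarith
        simp [hT, max_eq_right h1]
      simp only [hb, if_pos hyr]
      rcases lt_or_gt_of_ne ((hnear y hyr).2 hyU).1 with h | h
      · rw [if_neg h.not_gt]
        exact hmain _ (Or.inr rfl) (by linarith)
      · rw [if_pos h]
        exact hmain _ (Or.inl rfl) (by linarith)
    · simp only [hb, if_neg hyr]
  have hψc : ∀ σ, ContDiff ℝ 2 (ψ σ) := fun σ => contDiff_quadBarrier σ K a α β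
  have hcase : ∀ x : ℝ × ℝ, ‖x - a‖ < r ∨ r / 2 < ‖x - a‖ := fun x =>
    (lt_or_ge ‖x - a‖ r).imp_right fun h => by linarith
  refine ⟨b, G + 3 * G / c + 2 / r + 1, by positivity, fun x hxU => ?_, fun x hxU => ?_⟩
  · refine ContDiffAt.contDiffWithinAt ?_
    rcases hcase x with hx | hx
    · obtain ⟨σ, -, -, h⟩ := hinner x hxU hx
      exact (hTc.comp (hψc σ)).contDiffAt.congr_of_eventuallyEq h
    · exact contDiffAt_const.congr_of_eventuallyEq (houter x hxU hx)
  have hout0 : ρ ≤ ‖x - a‖ → b x = 0 := fun h => by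
    simp only [hb, if_neg (hrρ.trans h).not_gt]
  have hn := norm_nonneg (x - a)
  rcases hcase x with hx | hx
  · obtain ⟨σ, hσ, hs, h⟩ := hinner x hxU hx
    have hψ0 := (hlow x hxU hx σ hσ hs).1
    obtain ⟨hψG, hdψ⟩ := hup x hx σ hσ
    set P := max (1 - ψ σ x / c) 0 with hP
    have hP0 : 0 ≤ P := le_max_right _ _
    have hP1 : P < 1 := max_lt (by have := div_pos hψ0 hc0; linarith) one_pos
    have hbx : b x = P ^ 3 := h.eq_of_nhds
    have hlap : planeLaplacian b x = 6 * P * (-(1 / c)) * (-(1 / c)) *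
        (dirDeriv (1, 0) (ψ σ) x ^ 2 + dirDeriv (0, 1) (ψ σ) x ^ 2) +
        3 * P ^ 2 * (-(1 / c)) * planeLaplacian (ψ σ) x := by
      rw [h.planeLaplacian_eq]
      exact planeLaplacian_comp hTd hTd₁ (hψc σ).contDiffAt
    have hlapψ : planeLaplacian (ψ σ) x ≤ -1 := by
      simp only [hψ, planeLaplacian_quadBarrier, hα]
      nlinarith
    have hlapb : 3 * P ^ 2 * (1 / c) ≤ planeLaplacian b x := by
      have h1 : 0 ≤ 6 * P * (-(1 / c)) * (-(1 / c)) *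
          (dirDeriv (1, 0) (ψ σ) x ^ 2 + dirDeriv (0, 1) (ψ σ) x ^ 2) := by
        rw [mul_assoc (6 * P), neg_mul_neg]
        positivity
      have h2 : 0 ≤ 3 * P ^ 2 * (1 / c) := by positivity
      have h3 := mul_le_mul_of_nonneg_left hlapψ h2
      rw [hlap]
      linarith
    refine ⟨by rw [hbx]; positivity, ?_, hout0, ?_, fun v hv => ?_⟩
    · rw [hbx]
      exact pow_lt_one₀ hP0 hP1 (by norm_num)
    · have h1 : 1 - P ≤ ψ σ x / c := by
        have := le_max_left (1 - ψ σ x / c) 0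
        linarith
      have h2 : 1 - P ^ 3 ≤ 3 * (1 - P) := by
        nlinarith [mul_nonneg (sq_nonneg (1 - P)) (by linarith : 0 ≤ 2 + P)]
      have h3 : ψ σ x / c ≤ G * ‖x - a‖ / c := by gcongr
      have h4 : 3 * G / c * ‖x - a‖ = 3 * (G * ‖x - a‖ / c) := by ring
      have h5 : 0 ≤ (G + 2 / r + 1) * ‖x - a‖ := by positivity
      rw [hbx]
      linarith
    · have hd : |dirDeriv v b x| ≤ 3 * P ^ 2 * (1 / c) * G := by
        rw [h.dirDeriv_eq, dirDeriv_comp (hTd _) ((hψc σ).differentiable (by norm_num) x)]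
        simp only [hT₁, ← hP]
        rw [abs_mul, mul_neg, abs_neg, abs_of_nonneg (by positivity)]
        gcongr
        exact hdψ v hv
      have hl0 : 0 ≤ planeLaplacian b x := le_trans (by positivity) hlapb
      constructor
      · refine hd.trans ?_
        have h1 : 3 * P ^ 2 * (1 / c) * G ≤ 3 * 1 * (1 / c) * G := by
          gcongr
          exact pow_le_one₀ hP0 hP1.le
        have h2 : 3 * 1 * (1 / c) * G = 3 * G / c := by ring
        have h3 : 0 < 2 / r := by positivity
        linarith
      · calc |dirDeriv v b x| ≤ 3 * P ^ 2 * (1 / c) * G := hd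
          _ ≤ planeLaplacian b x * G := by gcongr
          _ ≤ planeLaplacian b x * (G + 3 * G / c + 2 / r + 1) := by
              gcongr
              have h3 : 0 < 2 / r := by positivity
              have h4 : 0 ≤ 3 * G / c := by positivity
              linarith
          _ = _ := mul_comm _ _
  · have h := houter x hxU hx
    have hbx : b x = 0 := h.eq_of_nhds
    have hd : ∀ v, dirDeriv v b x = 0 := fun v => by rw [h.dirDeriv_eq, dirDeriv_const]
    have hl : planeLaplacian b x = 0 := by
      have h0 : ∀ v, dirDeriv v (fun _ : ℝ × ℝ => (0 : ℝ)) = fun _ => 0 :=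
        fun v => funext fun y => dirDeriv_const 0
      rw [h.planeLaplacian_eq]
      simp [planeLaplacian, h0]
    refine ⟨hbx.ge, by rw [hbx]; norm_num, hout0, ?_, fun v hv => ?_⟩
    · rw [hbx, sub_zero]
      have h1 : 1 < 2 / r * ‖x - a‖ := by
        rw [div_mul_eq_mul_div, lt_div_iff₀ hr]
        linarith
      have h2 : 0 ≤ (G + 3 * G / c + 1) * ‖x - a‖ := by positivity
      linarith
    · rw [hd, hl, abs_zero, mul_zero]
      exact ⟨by positivity, le_rfl⟩

section Separated

variable {Q : Finset (ℝ × ℝ)}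

lemma eventually_separated (Q : Finset (ℝ × ℝ)) :
    ∀ᶠ ρ in 𝓝[>] (0 : ℝ), ∀ q ∈ Q, ∀ q' ∈ Q, q ≠ q' → 2 * ρ < ‖q - q'‖ := by
  refine (Finset.eventually_all Q).2 fun q _ => (Finset.eventually_all Q).2 fun q' _ => ?_
  by_cases h : q = q'
  · simp [h]
  · have h0 : 0 < ‖q - q'‖ := norm_pos_iff.2 (sub_ne_zero.2 h)
    have : Tendsto (fun ρ : ℝ => 2 * ρ) (𝓝[>] 0) (𝓝 0) := by
      have : Tendsto (fun ρ : ℝ => 2 * ρ) (𝓝 0) (𝓝 (2 * 0)) := by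
        exact (continuous_const.mul continuous_id).tendsto 0
      rw [mul_zero] at this
      exact this.mono_left nhdsWithin_le_nhds
    filter_upwards [this.eventually_lt_const h0] with ρ hρ _ using hρ

lemma sum_eq_of_separated {ρ : ℝ} (hsep : ∀ q ∈ Q, ∀ q' ∈ Q, q ≠ q' → 2 * ρ < ‖q - q'‖)
    {f : ℝ × ℝ → ℝ} {x q : ℝ × ℝ} (hf : ∀ q ∈ Q, ρ ≤ ‖x - q‖ → f q = 0) (hq : q ∈ Q)
    (hx : ‖x - q‖ < ρ) : ∑ q ∈ Q, f q = f q := by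
  refine Finset.sum_eq_single_of_mem q hq fun q' hq' hne => hf q' hq' ?_
  have h1 := hsep q' hq' q hq hne
  have h2 : ‖q' - q‖ ≤ ‖x - q‖ + ‖x - q'‖ := by
    rw [show q' - q = (x - q) - (x - q') by abel]
    exact norm_sub_le _ _
  linarith

lemma sum_eq_zero_or_eq_of_separated {ρ : ℝ}
    (hsep : ∀ q ∈ Q, ∀ q' ∈ Q, q ≠ q' → 2 * ρ < ‖q - q'‖)
    {f : ℝ × ℝ → ℝ} {x : ℝ × ℝ} (hf : ∀ q ∈ Q, ρ ≤ ‖x - q‖ → f q = 0) :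
    ∑ q ∈ Q, f q = 0 ∨ ∃ q ∈ Q, ∑ q ∈ Q, f q = f q := by
  by_cases h : ∃ q ∈ Q, ‖x - q‖ < ρ
  · obtain ⟨q, hq, hx⟩ := h
    exact Or.inr ⟨q, hq, sum_eq_of_separated hsep hf hq hx⟩
  · push Not at h
    exact Or.inl (Finset.sum_eq_zero fun q hq => hf q hq (h q hq))

end Separated

lemma planeLaplacian_paraboloid (M : ℝ) (x : ℝ × ℝ) :
    ContDiff ℝ 2 (fun y : ℝ × ℝ => M - y.1 ^ 2 - y.2 ^ 2) ∧
      (∀ v, dirDeriv v (fun y : ℝ × ℝ => M - y.1 ^ 2 - y.2 ^ 2) x =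
        -2 * x.1 * v.1 - 2 * x.2 * v.2) ∧
      planeLaplacian (fun y : ℝ × ℝ => M - y.1 ^ 2 - y.2 ^ 2) x = -4 := by
  have h1 : ∀ v y, dirDeriv v (fun y : ℝ × ℝ => M - y.1 ^ 2 - y.2 ^ 2) y =
      -2 * y.1 * v.1 - 2 * y.2 * v.2 := by
    intro v y
    have h := (((hasFDerivAt_fst (𝕜 := ℝ) (p := y)).pow 2).const_sub M).sub
      ((hasFDerivAt_snd (𝕜 := ℝ) (p := y)).pow 2)
    simp only [dirDeriv]
    erw [h.fderiv]
    simp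
  have h2 : ∀ v, dirDeriv v (fun y : ℝ × ℝ => -2 * y.1 * v.1 - 2 * y.2 * v.2) x =
      -2 * v.1 * v.1 - 2 * v.2 * v.2 := by
    intro v
    have h := (((hasFDerivAt_fst (𝕜 := ℝ) (p := x)).const_mul (-2)).mul_const v.1).sub
      (((hasFDerivAt_snd (𝕜 := ℝ) (p := x)).const_mul 2).mul_const v.2)
    simp only [dirDeriv]
    erw [h.fderiv]
    simp
    ring
  refine ⟨by fun_prop, fun v => h1 v x, ?_⟩
  simp only [planeLaplacian, funext (h1 _), h2]
  norm_num

/-- A bounded superharmonic function on `U` which vanishes linearly at the points of `Q`. -/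
lemma exists_barrier {U : Set (ℝ × ℝ)} (hUo : IsOpen U) (hUb : Bornology.IsBounded U)
    (hC2 : ∀ x ∈ frontier U, ∃ (θ : ℝ) (φ : ℝ → ℝ) (ε : ℝ), 0 < ε ∧ ContDiff ℝ 2 φ ∧
      ∀ y : ℝ × ℝ, euclDist y x < ε →
        (y ∈ frontier U ↔ (rotPlane θ y).2 = φ ((rotPlane θ y).1)))
    (Q : Finset (ℝ × ℝ)) (hQ : (Q : Set (ℝ × ℝ)) ⊆ frontier U) :
    ∃ (Ψ : ℝ × ℝ → ℝ) (C : ℝ), 0 < C ∧ ContDiffOn ℝ 2 Ψ U ∧ ∀ x ∈ U, 0 ≤ Ψ x ∧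
      planeLaplacian Ψ x < 0 ∧ (∀ q ∈ Q, Ψ x ≤ C * ‖x - q‖) ∧
      |dirDeriv (1, 0) Ψ x| ≤ C ∧ |dirDeriv (0, 1) Ψ x| ≤ C := by
  obtain ⟨ρ, hsep, hρ⟩ := ((eventually_separated Q).and self_mem_nhdsWithin).exists
  have hρ0 : 0 < ρ := hρ
  have hloc : ∀ q : ℝ × ℝ, ∃ (b : ℝ × ℝ → ℝ) (C : ℝ), q ∈ Q → 0 < C ∧ ContDiffOn ℝ 2 b U ∧
      ∀ x ∈ U, 0 ≤ b x ∧ b x < 1 ∧ (ρ ≤ ‖x - q‖ → b x = 0) ∧ 1 - b x ≤ C * ‖x - q‖ ∧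
      ∀ v : ℝ × ℝ, ‖v‖ ≤ 1 → |dirDeriv v b x| ≤ C ∧
        |dirDeriv v b x| ≤ C * planeLaplacian b x := by
    intro q
    by_cases hq : q ∈ Q
    · obtain ⟨θ, φ, ε, hε, hφ, hg⟩ := hC2 q (hQ hq)
      obtain ⟨b, C, h⟩ := exists_local_barrier hUo (hQ hq) hε hφ hg hρ0
      exact ⟨b, C, fun _ => h⟩
    · exact ⟨0, 0, fun h => absurd h hq⟩
  choose b C hb using hloc
  have hbc : ∀ q ∈ Q, ∀ x ∈ U, ContDiffAt ℝ 2 (b q) x := fun q hq x hx =>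
    ((hb q hq).2.1).contDiffAt (hUo.mem_nhds hx)
  set C₁ := 1 + ∑ q ∈ Q, C q with hC₁
  have hC0 : 0 ≤ ∑ q ∈ Q, C q := Finset.sum_nonneg fun q hq => (hb q hq).1.le
  have hC₁0 : 0 < C₁ := by positivity
  have hCle : ∀ q ∈ Q, C q ≤ C₁ := fun q hq => by
    have := Finset.single_le_sum (f := C) (fun q hq => (hb q hq).1.le) hq
    linarith
  set Θ : ℝ × ℝ → ℝ := fun x => 1 - ∑ q ∈ Q, b q x with hΘ
  have hsumc : ∀ x ∈ U, ContDiffAt ℝ 2 (fun y => ∑ q ∈ Q, b q y) x := fun x hx =>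
    ContDiffAt.sum fun q hq => hbc q hq x hx
  have hΘc : ∀ x ∈ U, ContDiffAt ℝ 2 Θ x := fun x hx => contDiffAt_const.sub (hsumc x hx)
  have hΘ0 : ∀ x ∈ U, 0 < Θ x := by
    intro x hx
    have := sum_eq_zero_or_eq_of_separated hsep (f := fun q => b q x) (x := x)
      fun q hq h => ((hb q hq).2.2 x hx).2.2.1 h
    simp only [hΘ]
    rcases this with h | ⟨q, hq, h⟩
    · rw [h]
      norm_num
    · rw [h]
      linarith [((hb q hq).2.2 x hx).2.1]
  have hΘq : ∀ x ∈ U, ∀ q ∈ Q, Θ x ≤ C₁ * ‖x - q‖ := by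
    intro x hx q hq
    have h1 := Finset.single_le_sum (f := fun q => b q x)
      (fun q hq => ((hb q hq).2.2 x hx).1) hq
    have h2 := ((hb q hq).2.2 x hx).2.2.2.1
    have h3 : C q * ‖x - q‖ ≤ C₁ * ‖x - q‖ := by
      gcongr
      exact hCle q hq
    simp only [hΘ]
    linarith
  have hΘ1 : ∀ x ∈ U, Θ x ≤ 1 := fun x hx => by
    have := Finset.sum_nonneg fun q hq => ((hb q hq).2.2 x hx).1
    simp only [hΘ]
    linarith
  have hΘlap : ∀ x ∈ U, planeLaplacian Θ x = -∑ q ∈ Q, planeLaplacian (b q) x := fun x hx => by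
    rw [planeLaplacian_one_sub (hsumc x hx), planeLaplacian_sum Q fun q hq => hbc q hq x hx]
  have hΘd : ∀ x ∈ U, ∀ v : ℝ × ℝ, ‖v‖ ≤ 1 → |dirDeriv v Θ x| ≤ C₁ ∧
      |dirDeriv v Θ x| ≤ C₁ * -planeLaplacian Θ x := by
    intro x hx v hv
    have h0 : |dirDeriv v Θ x| ≤ ∑ q ∈ Q, |dirDeriv v (b q) x| := by
      rw [dirDeriv_one_sub ((hsumc x hx).differentiableAt (by norm_num)), abs_neg,
        dirDeriv_sum Q fun q hq => (hbc q hq x hx).differentiableAt (by norm_num)]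
      exact Finset.abs_sum_le_sum_abs _ _
    constructor
    · have : ∑ q ∈ Q, |dirDeriv v (b q) x| ≤ ∑ q ∈ Q, C q :=
        Finset.sum_le_sum fun q hq => (((hb q hq).2.2 x hx).2.2.2.2 v hv).1
      linarith
    · rw [hΘlap x hx, neg_neg, Finset.mul_sum]
      refine h0.trans (Finset.sum_le_sum fun q hq => ?_)
      have h1 := (((hb q hq).2.2 x hx).2.2.2.2 v hv).2
      have h2 : 0 ≤ planeLaplacian (b q) x := by
        have := (abs_nonneg _).trans h1
        exact nonneg_of_mul_nonneg_right this (hb q hq).1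
      exact h1.trans (mul_le_mul_of_nonneg_right (hCle q hq) h2)
  obtain ⟨R, hR0, hR⟩ := hUb.exists_pos_norm_le
  set M := 2 * R ^ 2 + 8 * R * C₁ + 1 with hM
  set Φ : ℝ × ℝ → ℝ := fun y => M - y.1 ^ 2 - y.2 ^ 2 with hΦ
  have hM0 : 0 < M := by positivity
  have hΦlow : ∀ x ∈ U, 8 * R * C₁ ≤ Φ x ∧ Φ x ≤ M ∧ |x.1| ≤ R ∧ |x.2| ≤ R := by
    intro x hx
    have h1 : |x.1| ≤ R := (norm_fst_le x).trans (hR x hx)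
    have h2 : |x.2| ≤ R := (norm_snd_le x).trans (hR x hx)
    have h3 := sq_le_sq' (abs_le.1 h1).1 (abs_le.1 h1).2
    have h4 := sq_le_sq' (abs_le.1 h2).1 (abs_le.1 h2).2
    refine ⟨?_, ?_, h1, h2⟩
    · simp only [hΦ, hM]
      linarith
    · simp only [hΦ]
      linarith [sq_nonneg x.1, sq_nonneg x.2]
  have hΦc : ContDiff ℝ 2 Φ := (planeLaplacian_paraboloid M 0).1
  have hΨd : ∀ x ∈ U, ∀ v : ℝ × ℝ, ‖v‖ ≤ 1 →
      |dirDeriv v (fun y => Φ y * Θ y) x| ≤ 4 * R + M * C₁ := by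
    intro x hx v hv
    obtain ⟨h1, h2, h3, h4⟩ := hΦlow x hx
    have hv1 : |v.1| ≤ 1 := (norm_fst_le v).trans hv
    have hv2 : |v.2| ≤ 1 := (norm_snd_le v).trans hv
    rw [dirDeriv_mul (hΦc.differentiable (by norm_num) x)
      ((hΘc x hx).differentiableAt (by norm_num)), (planeLaplacian_paraboloid M x).2.1 v]
    have hΦ0 : 0 ≤ Φ x := le_trans (by positivity) h1
    have ha : |-2 * x.1 * v.1 - 2 * x.2 * v.2| ≤ 4 * R := by
      refine (abs_sub _ _).trans ?_
      simp only [abs_mul, abs_neg, abs_two]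
      nlinarith [abs_nonneg x.1, abs_nonneg x.2, abs_nonneg v.1, abs_nonneg v.2]
    refine (abs_add_le _ _).trans ?_
    rw [abs_mul, abs_mul, abs_of_pos (hΘ0 x hx), abs_of_nonneg hΦ0]
    refine add_le_add ?_ ?_
    · calc _ ≤ 4 * R * 1 := mul_le_mul ha (hΘ1 x hx) (hΘ0 x hx).le (by positivity)
        _ = _ := mul_one _
    · exact mul_le_mul h2 (hΘd x hx v hv).1 (abs_nonneg _) hM0.le
  refine ⟨fun y => Φ y * Θ y, 4 * R + M * C₁, by positivity,
    fun x hx => (hΦc.contDiffAt.mul (hΘc x hx)).contDiffWithinAt, fun x hx => ?_⟩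
  obtain ⟨h1, h2, h3, h4⟩ := hΦlow x hx
  have hΦ0 : 0 ≤ Φ x := le_trans (by positivity) h1
  have hΘx := hΘ0 x hx
  refine ⟨mul_nonneg hΦ0 hΘx.le, ?_, fun q hq => ?_, hΨd x hx _ (by simp [Prod.norm_def]),
    hΨd x hx _ (by simp [Prod.norm_def])⟩
  · have d1 := (hΘd x hx (1, 0) (by simp [Prod.norm_def])).2
    have d2 := (hΘd x hx (0, 1) (by simp [Prod.norm_def])).2
    rw [planeLaplacian_mul hΦc.contDiffAt (hΘc x hx), (planeLaplacian_paraboloid M x).2.2,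
      (planeLaplacian_paraboloid M x).2.1, (planeLaplacian_paraboloid M x).2.1]
    set D₁ := dirDeriv (1, 0) Θ x
    set D₂ := dirDeriv (0, 1) Θ x
    set N := -planeLaplacian Θ x with hN
    have hN0 : 0 ≤ N := nonneg_of_mul_nonneg_right ((abs_nonneg _).trans d1) hC₁0
    have e1 : |x.1 * D₁| ≤ R * (C₁ * N) := by
      rw [abs_mul]
      exact mul_le_mul h3 d1 (abs_nonneg _) hR0.le
    have e2 : |x.2 * D₂| ≤ R * (C₁ * N) := by
      rw [abs_mul]
      exact mul_le_mul h4 d2 (abs_nonneg _) hR0.le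
    have e3 : 8 * R * C₁ * N ≤ Φ x * N := by gcongr
    have e4 : planeLaplacian Θ x = -N := by rw [hN, neg_neg]
    rw [e4]
    have := (abs_le.1 e1).1
    have := (abs_le.1 e2).1
    simp only
    linarith
  · calc Φ x * Θ x ≤ M * (C₁ * ‖x - q‖) := mul_le_mul h2 (hΘq x hx q hq) hΘx.le hM0.le
      _ ≤ (4 * R + M * C₁) * ‖x - q‖ := by nlinarith [norm_nonneg (x - q)]

lemma dirDeriv_comp_smul_sub (F : ℝ × ℝ → ℝ) (hF : Differentiable ℝ F) (a : ℝ) (q v x : ℝ × ℝ) :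
    dirDeriv v (fun y => F (a • (y - q))) x = a * dirDeriv v F (a • (x - q)) := by
  have h1 : HasFDerivAt (fun y : ℝ × ℝ => a • (y - q)) (a • ContinuousLinearMap.id ℝ (ℝ × ℝ)) x :=
    ((hasFDerivAt_id x).sub_const q).const_smul a
  have h2 := ((hF (a • (x - q))).hasFDerivAt.comp x h1).fderiv
  simp only [dirDeriv]
  erw [h2]
  simp

lemma exists_abs_le_of_hasCompactSupport {F : ℝ × ℝ → ℝ} (hF : Continuous F)
    (hc : HasCompactSupport F) : ∃ M, 0 < M ∧ ∀ x, |F x| ≤ M := by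
  obtain ⟨M, hM⟩ := hF.bounded_above_of_compact_support hc
  exact ⟨max M 1, by positivity, fun x => (hM x).trans (le_max_left _ _)⟩

/-- Cutoff functions around points of the plane, with the expected scaling of derivatives. -/
lemma exists_cutoff : ∃ M : ℝ, 0 < M ∧ ∀ ε : ℝ, 0 < ε → ∀ q : ℝ × ℝ, ∃ f : ℝ × ℝ → ℝ,
    ContDiff ℝ 2 f ∧ ∀ x, 0 ≤ f x ∧ f x ≤ 1 ∧ (‖x - q‖ ≤ ε → f x = 1) ∧
      (2 * ε ≤ ‖x - q‖ → f x = 0) ∧ |dirDeriv (1, 0) f x| ≤ M / ε ∧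
      |dirDeriv (0, 1) f x| ≤ M / ε ∧ |planeLaplacian f x| ≤ M / ε ^ 2 := by
  let B : ContDiffBump (0 : ℝ × ℝ) := ⟨1, 2, one_pos, one_lt_two⟩
  have hB2 : ContDiff ℝ 2 B := B.contDiff
  have hB1 : ∀ v, ContDiff ℝ 1 (dirDeriv v B) := fun v =>
    contDiff_iff_contDiffAt.2 fun x => hB2.contDiffAt.dirDeriv_one v
  have hB0 : ∀ v, Continuous (dirDeriv v (dirDeriv v B)) := fun v =>
    ((hB1 v).continuous_fderiv (by norm_num)).clm_apply continuous_const
  have hsupp : ∀ (F : ℝ × ℝ → ℝ) (v : ℝ × ℝ), HasCompactSupport F →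
      HasCompactSupport (dirDeriv v F) := fun F v hF => hF.fderiv_apply (𝕜 := ℝ) v
  have hcB : HasCompactSupport (B : ℝ × ℝ → ℝ) := B.hasCompactSupport
  obtain ⟨M₁, hM₁, h₁⟩ := exists_abs_le_of_hasCompactSupport (hB1 (1, 0)).continuous
    (hsupp _ _ hcB)
  obtain ⟨M₂, hM₂, h₂⟩ := exists_abs_le_of_hasCompactSupport (hB1 (0, 1)).continuous
    (hsupp _ _ hcB)
  obtain ⟨M₃, hM₃, h₃⟩ := exists_abs_le_of_hasCompactSupport
    (F := planeLaplacian B) ((hB0 (1, 0)).add (hB0 (0, 1)))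
    ((hsupp _ _ (hsupp _ _ hcB)).add (hsupp _ _ (hsupp _ _ hcB)))
  refine ⟨M₁ + M₂ + M₃, by positivity, fun ε hε q => ⟨fun y => B (ε⁻¹ • (y - q)),
    hB2.comp (by fun_prop), fun x => ?_⟩⟩
  have hd : ∀ v y, dirDeriv v (fun y => B (ε⁻¹ • (y - q))) y =
      ε⁻¹ * dirDeriv v B (ε⁻¹ • (y - q)) := fun v y =>
    dirDeriv_comp_smul_sub _ (hB2.differentiable (by norm_num)) _ _ _ _
  have hdd : ∀ v y, dirDeriv v (dirDeriv v (fun y => B (ε⁻¹ • (y - q)))) y =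
      ε⁻¹ ^ 2 * dirDeriv v (dirDeriv v B) (ε⁻¹ • (y - q)) := fun v y => by
    have hdf := (hB1 v).differentiable (by norm_num)
    rw [show dirDeriv v (fun y => B (ε⁻¹ • (y - q))) =
      fun y => ε⁻¹ * dirDeriv v B (ε⁻¹ • (y - q)) from funext (hd v)]
    rw [dirDeriv_mul (g := fun y => dirDeriv v B (ε⁻¹ • (y - q))) (differentiableAt_const _)
      (hdf.comp (by fun_prop : Differentiable ℝ fun y : ℝ × ℝ => ε⁻¹ • (y - q))).differentiableAt,
      dirDeriv_const, dirDeriv_comp_smul_sub _ hdf]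
    ring
  have hn : ‖ε⁻¹ • (x - q)‖ = ‖x - q‖ / ε := by
    rw [norm_smul, norm_inv, Real.norm_of_nonneg hε.le, inv_mul_eq_div]
  refine ⟨B.nonneg, B.le_one, fun h => ?_, fun h => ?_, ?_, ?_, ?_⟩
  · refine B.one_of_mem_closedBall ?_
    rw [mem_closedBall_zero_iff, hn]
    exact (div_le_one hε).2 h
  · refine B.zero_of_le_dist ?_
    rw [dist_zero_right, hn]
    exact (le_div_iff₀ hε).2 h
  · rw [hd, abs_mul, abs_of_pos (inv_pos.2 hε), inv_mul_eq_div]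
    gcongr
    linarith [h₁ (ε⁻¹ • (x - q))]
  · rw [hd, abs_mul, abs_of_pos (inv_pos.2 hε), inv_mul_eq_div]
    gcongr
    linarith [h₂ (ε⁻¹ • (x - q))]
  · rw [planeLaplacian, hdd, hdd, ← mul_add, abs_mul, abs_of_pos (by positivity), inv_pow,
      inv_mul_eq_div]
    gcongr
    have := h₃ (ε⁻¹ • (x - q))
    rw [planeLaplacian] at this
    linarith

section OneSided

variable {U : Set (ℝ × ℝ)} {Q : Finset (ℝ × ℝ)} {Ψ u : ℝ × ℝ → ℝ} {C : ℝ}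

lemma abs_cutoff_commutator_le {f : ℝ × ℝ → ℝ} {x q : ℝ × ℝ} {M ε : ℝ} (hC : 0 < C) (hM : 0 < M)
    (hε : 0 < ε) (hf0 : ∀ x, 2 * ε ≤ ‖x - q‖ → f x = 0)
    (hf1 : |dirDeriv (1, 0) f x| ≤ M / ε) (hf2 : |dirDeriv (0, 1) f x| ≤ M / ε)
    (hf3 : |planeLaplacian f x| ≤ M / ε ^ 2) (hΨ0 : 0 ≤ Ψ x) (hΨ : Ψ x ≤ C * ‖x - q‖)
    (hΨ1 : |dirDeriv (1, 0) Ψ x| ≤ C) (hΨ2 : |dirDeriv (0, 1) Ψ x| ≤ C) :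
    |planeLaplacian f x * Ψ x + 2 * (dirDeriv (1, 0) f x * dirDeriv (1, 0) Ψ x +
      dirDeriv (0, 1) f x * dirDeriv (0, 1) Ψ x)| ≤
        (Metric.closedBall q (2 * ε)).indicator (fun _ => 6 * M * C / ε) x := by
  by_cases hx : x ∈ Metric.closedBall q (2 * ε)
  · rw [indicator_of_mem hx]
    rw [mem_closedBall_iff_norm] at hx
    have h1 : |planeLaplacian f x * Ψ x| ≤ M / ε ^ 2 * (C * (2 * ε)) := by
      rw [abs_mul, abs_of_nonneg hΨ0]
      exact mul_le_mul hf3 (hΨ.trans (by gcongr)) hΨ0 (by positivity)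
    have h2 : |dirDeriv (1, 0) f x * dirDeriv (1, 0) Ψ x| ≤ M / ε * C := by
      rw [abs_mul]
      exact mul_le_mul hf1 hΨ1 (abs_nonneg _) (by positivity)
    have h3 : |dirDeriv (0, 1) f x * dirDeriv (0, 1) Ψ x| ≤ M / ε * C := by
      rw [abs_mul]
      exact mul_le_mul hf2 hΨ2 (abs_nonneg _) (by positivity)
    have h4 : 6 * M * C / ε = M / ε ^ 2 * (C * (2 * ε)) + 4 * (M / ε * C) := by
      field_simp
      ring
    rw [h4]
    rw [abs_le] at h1 h2 h3 ⊢
    constructor <;> linarith [h1.1, h1.2, h2.1, h2.2, h3.1, h3.2]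
  · rw [indicator_of_notMem hx]
    rw [mem_closedBall_iff_norm, not_le] at hx
    have h0 : f =ᶠ[𝓝 x] fun _ => 0 := by
      have : ∀ᶠ y in 𝓝 x, 2 * ε < ‖y - q‖ :=
        (continuous_id.sub continuous_const).norm.continuousAt.eventually (lt_mem_nhds hx)
      filter_upwards [this] with y hy using hf0 y hy.le
    have hz : ∀ v y, dirDeriv v (fun _ => (0 : ℝ)) y = 0 := fun v y => dirDeriv_const 0
    have h3 : planeLaplacian f x = 0 := by
      rw [h0.planeLaplacian_eq, planeLaplacian]
      simp only [show ∀ v, dirDeriv v (fun _ => (0 : ℝ)) = fun _ => 0 from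
        fun v => funext (hz v), add_zero]
    rw [h0.dirDeriv_eq, h0.dirDeriv_eq, hz, hz, h3]
    simp

lemma contDiffOn_and_planeLaplacian_softPos_nonneg (hUo : IsOpen U) (hu : ContDiffOn ℝ 2 u U)
    (hΔ : ∀ x ∈ U, 0 < u x → 0 ≤ planeLaplacian u x) {δ : ℝ} (hδ : 0 < δ) :
    ContDiffOn ℝ 2 (fun x => softPos (u x - δ)) U ∧
      ∀ x ∈ U, 0 ≤ planeLaplacian (fun x => softPos (u x - δ)) x := by
  refine ⟨contDiff_softPos.comp_contDiffOn (hu.sub contDiffOn_const), fun x hx => ?_⟩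
  have hux : ContDiffAt ℝ 2 u x := hu.contDiffAt (hUo.mem_nhds hx)
  have hT : ∀ s, HasDerivAt (fun s => softPos (s - δ))
      (max (s - δ) 0 ^ 2 / (1 + max (s - δ) 0 ^ 2)) s := fun s =>
    (hasDerivAt_softPos (s - δ)).comp_sub_const s δ
  have hT₁ : ∀ s, HasDerivAt (fun s => max (s - δ) 0 ^ 2 / (1 + max (s - δ) 0 ^ 2))
      (2 * max (s - δ) 0 / (1 + max (s - δ) 0 ^ 2) ^ 2) s := fun s =>
    (hasDerivAt_deriv_softPos (s - δ)).comp_sub_const s δ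
  rw [planeLaplacian_comp hT hT₁ hux]
  refine add_nonneg (by positivity) ?_
  rcases le_or_gt (u x) δ with h | h
  · rw [max_eq_right (by linarith)]
    simp
  · exact mul_nonneg (by positivity) (hΔ x hx (hδ.trans h))

lemma volume_closedBall_two_mul (q : ℝ × ℝ) {ε : ℝ} (hε : 0 ≤ ε) :
    volume (Metric.closedBall q (2 * ε)) = ENNReal.ofReal (16 * ε ^ 2) := by
  rw [← Prod.mk.eta (p := q), ← closedBall_prod_same, Measure.volume_eq_prod, Measure.prod_prod,
    Real.volume_closedBall, Real.volume_closedBall, ← ENNReal.ofReal_mul (by positivity)]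
  congr 1
  ring

lemma integral_indicator_bound {μ : Measure (ℝ × ℝ)} [IsFiniteMeasure μ] (hμ : μ ≤ volume)
    (hu2 : Integrable (fun x => u x ^ 2) μ) {ε lam : ℝ} (hε : 0 < ε) (hlam : 0 < lam)
    (q : ℝ × ℝ) :
    Integrable ((Metric.closedBall q (2 * ε)).indicator
        fun x => u x ^ 2 / lam + lam / ε ^ 2) μ ∧
      ∫ x, (Metric.closedBall q (2 * ε)).indicator (fun x => u x ^ 2 / lam + lam / ε ^ 2) x ∂μ ≤
        (∫ x in Metric.closedBall q (2 * ε), u x ^ 2 ∂μ) / lam + 16 * lam := by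
  have hm : MeasurableSet (Metric.closedBall q (2 * ε)) := Metric.isClosed_closedBall.measurableSet
  have hi1 : Integrable (fun x => u x ^ 2 / lam) μ := hu2.div_const lam
  have hi2 : Integrable (fun _ : ℝ × ℝ => lam / ε ^ 2) μ := integrable_const _
  refine ⟨(hi1.add hi2).indicator hm, ?_⟩
  rw [integral_indicator hm, integral_add hi1.integrableOn hi2.integrableOn, integral_div,
    setIntegral_const, smul_eq_mul]
  have hr : μ.real (Metric.closedBall q (2 * ε)) ≤ 16 * ε ^ 2 := by
    refine ENNReal.toReal_le_of_le_ofReal (by positivity) ?_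
    exact (hμ _).trans_eq (volume_closedBall_two_mul q hε.le)
  have : μ.real (Metric.closedBall q (2 * ε)) * (lam / ε ^ 2) ≤ 16 * ε ^ 2 * (lam / ε ^ 2) := by
    gcongr
  have h16 : 16 * ε ^ 2 * (lam / ε ^ 2) = 16 * lam := by field_simp
  linarith

/-- The Green identity tested against the barrier, cut off near the points of `Q`. -/
lemma mul_measureReal_le_of_barrier {M ε lam δ c₀ : ℝ} {f : ℝ × ℝ → ℝ × ℝ → ℝ} {N : Set (ℝ × ℝ)}
    (hUo : IsOpen U) (hUb : Bornology.IsBounded U) (hC : 0 < C) (hM : 0 < M) (hε : 0 < ε)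
    (hlam : 0 < lam) (hδ : 0 < δ)
    (hΨ : ContDiffOn ℝ 2 Ψ U) (hΨU : ∀ x ∈ U, 0 ≤ Ψ x ∧
      planeLaplacian Ψ x < 0 ∧ (∀ q ∈ Q, Ψ x ≤ C * ‖x - q‖) ∧
      |dirDeriv (1, 0) Ψ x| ≤ C ∧ |dirDeriv (0, 1) Ψ x| ≤ C)
    (hf : ∀ q, ContDiff ℝ 2 (f q) ∧ ∀ x, 0 ≤ f q x ∧ f q x ≤ 1 ∧ (‖x - q‖ ≤ ε → f q x = 1) ∧
      (2 * ε ≤ ‖x - q‖ → f q x = 0) ∧ |dirDeriv (1, 0) (f q) x| ≤ M / ε ∧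
      |dirDeriv (0, 1) (f q) x| ≤ M / ε ∧ |planeLaplacian (f q) x| ≤ M / ε ^ 2)
    (hsep : ∀ q ∈ Q, ∀ q' ∈ Q, q ≠ q' → 2 * (2 * ε) < ‖q - q'‖)
    (hu2 : IntegrableOn (fun x => u x ^ 2) U) (hu : ContDiffOn ℝ 2 u U)
    (hΔ : ∀ x ∈ U, 0 < u x → 0 ≤ planeLaplacian u x)
    (hcont : ContinuousOn u (closure U \ (Q : Set (ℝ × ℝ))))
    (hub : ∀ x ∈ frontier U \ (Q : Set (ℝ × ℝ)), u x = 0)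
    (hNm : MeasurableSet N) (hNQ : ∀ x ∈ N, ∀ q ∈ Q, 2 * ε ≤ ‖x - q‖)
    (hNc : ∀ x ∈ N, softPos (u x - δ) * planeLaplacian Ψ x ≤ -c₀) :
    c₀ * (volume.restrict U).real N ≤ ∑ q ∈ Q, 3 * M * C *
      ((∫ x in Metric.closedBall q (2 * ε), u x ^ 2 ∂(volume.restrict U)) / lam + 16 * lam) := by
  have : IsFiniteMeasure (volume.restrict U) := ⟨by
    rw [Measure.restrict_apply_univ]; exact hUb.measure_lt_top⟩
  obtain ⟨hW, hΔW⟩ := contDiffOn_and_planeLaplacian_softPos_nonneg hUo hu hΔ hδ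
  set W : ℝ × ℝ → ℝ := fun x => softPos (u x - δ) with hWdef
  have hW0 : ∀ x, 0 ≤ W x := fun x => softPos_nonneg _
  have hWu : ∀ x, W x ≤ |u x| := fun x =>
    (softPos_le _).trans (max_le (by linarith [le_abs_self (u x)]) (abs_nonneg _))
  set S : ℝ × ℝ → ℝ := fun x => ∑ q ∈ Q, f q x with hSdef
  have hS : ContDiff ℝ 2 S := ContDiff.sum fun q _ => (hf q).1
  set χ : ℝ × ℝ → ℝ := fun x => 1 - S x with hχdef
  have hχ : ContDiff ℝ 2 χ := contDiff_const.sub hS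
  have hf0 : ∀ x, ∀ q ∈ Q, 2 * ε ≤ ‖x - q‖ → f q x = 0 := fun x q _ h => ((hf q).2 x).2.2.2.1 h
  have hχ0 : ∀ x, 0 ≤ χ x := by
    intro x
    rcases sum_eq_zero_or_eq_of_separated hsep (f := fun q => f q x) (hf0 x) with h | ⟨q, _, h⟩
    · simp only [hχdef, hSdef, h]; norm_num
    · simp only [hχdef, hSdef, h]; linarith [((hf q).2 x).2.1]
  set K : Set (ℝ × ℝ) := (closure U ∩ {x | ∀ q ∈ Q, ε ≤ ‖x - q‖}) ∩ u ⁻¹' Ici δ with hK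
  have hfar : IsClosed {x : ℝ × ℝ | ∀ q ∈ Q, ε ≤ ‖x - q‖} := by
    simp only [ofPred_forall]
    exact isClosed_biInter fun q _ => isClosed_le continuous_const (by fun_prop)
  have hsub : closure U ∩ {x | ∀ q ∈ Q, ε ≤ ‖x - q‖} ⊆ closure U \ (Q : Set (ℝ × ℝ)) := by
    refine fun x hx => ⟨hx.1, fun hxQ => ?_⟩
    have := hx.2 x hxQ
    rw [sub_self, norm_zero] at this
    linarith
  have hKc : IsCompact K := Metric.isCompact_of_isClosed_isBounded
    ((hcont.mono hsub).preimage_isClosed_of_isClosed (isClosed_closure.inter hfar) isClosed_Ici)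
    (hUb.closure.subset fun x hx => hx.1.1)
  have hKU : K ⊆ U := by
    intro x hx
    by_contra hxU
    have h1 : x ∈ frontier U := by
      rw [hUo.frontier_eq]
      exact ⟨hx.1.1, hxU⟩
    have h2 := hub x ⟨h1, (hsub hx.1).2⟩
    have h3 : δ ≤ u x := hx.2
    linarith
  have h0 : ∀ x ∈ U \ K, W =ᶠ[𝓝 x] 0 ∨ (fun y => χ y * Ψ y) =ᶠ[𝓝 x] 0 := by
    rintro x ⟨hxU, hxK⟩
    by_cases hx : ∃ q ∈ Q, ‖x - q‖ < ε
    · obtain ⟨q, hq, hlt⟩ := hx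
      right
      have : ∀ᶠ y in 𝓝 x, ‖y - q‖ < ε :=
        (continuous_id.sub continuous_const).norm.continuousAt.eventually (gt_mem_nhds hlt)
      filter_upwards [this] with y hy
      have h1 := sum_eq_of_separated hsep (f := fun q => f q y) (hf0 y) hq (by linarith)
      simp [hχdef, hSdef, h1, ((hf q).2 y).2.2.1 hy.le]
    · push Not at hx
      left
      have hlt : u x < δ := by
        by_contra h
        exact hxK ⟨⟨subset_closure hxU, hx⟩, not_lt.1 h⟩
      have hca : ContinuousAt u x := hu.continuousOn.continuousAt (hUo.mem_nhds hxU)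
      filter_upwards [hca.eventually (gt_mem_nhds hlt)] with y hy
      exact softPos_of_nonpos (by linarith)
  obtain ⟨hInt, hzero⟩ := integrableOn_and_setIntegral_green hUo hKc hKU hW
    (hχ.contDiffOn.mul hΨ) h0
  have hpt : ∀ x ∈ U, W x * planeLaplacian (fun y => χ y * Ψ y) x -
      (χ x * Ψ x) * planeLaplacian W x ≤ N.indicator (fun _ => -c₀) x +
        ∑ q ∈ Q, 3 * M * C * (Metric.closedBall q (2 * ε)).indicator
          (fun x => u x ^ 2 / lam + lam / ε ^ 2) x := by
    intro x hx
    obtain ⟨hΨ0, hΨΔ, hΨq, hΨ1, hΨ2⟩ := hΨU x hx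
    have hfx : ∀ q ∈ Q, ContDiffAt ℝ 2 (f q) x := fun q _ => (hf q).1.contDiffAt
    have hfd : ∀ q ∈ Q, DifferentiableAt ℝ (f q) x := fun q hq =>
      (hfx q hq).differentiableAt (by norm_num)
    rw [planeLaplacian_mul hχ.contDiffAt (hΨ.contDiffAt (hUo.mem_nhds hx)),
      planeLaplacian_one_sub hS.contDiffAt,
      dirDeriv_one_sub (hS.contDiffAt.differentiableAt (by norm_num)),
      dirDeriv_one_sub (hS.contDiffAt.differentiableAt (by norm_num)),
      planeLaplacian_sum Q hfx, dirDeriv_sum Q hfd, dirDeriv_sum Q hfd]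
    have hcomm : ∀ q ∈ Q, -(W x * (planeLaplacian (f q) x * Ψ x +
        2 * (dirDeriv (1, 0) (f q) x * dirDeriv (1, 0) Ψ x +
          dirDeriv (0, 1) (f q) x * dirDeriv (0, 1) Ψ x))) ≤
        3 * M * C * (Metric.closedBall q (2 * ε)).indicator
          (fun x => u x ^ 2 / lam + lam / ε ^ 2) x := by
      intro q hq
      obtain ⟨-, -, -, -, h1, h2, h3⟩ := (hf q).2 x
      have hb := abs_cutoff_commutator_le hC hM hε (fun y hy => hf0 y q hq hy) h1 h2 h3 hΨ0
        (hΨq q hq) hΨ1 hΨ2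
      refine (neg_le_abs _).trans ?_
      rw [abs_mul, abs_of_nonneg (hW0 x)]
      refine (mul_le_mul (hWu x) hb (abs_nonneg _) (abs_nonneg _)).trans ?_
      by_cases hxq : x ∈ Metric.closedBall q (2 * ε)
      · rw [indicator_of_mem hxq, indicator_of_mem hxq]
        have hy : 2 * |u x| / ε ≤ u x ^ 2 / lam + lam / ε ^ 2 := by
          have h5 : u x ^ 2 / lam + lam / ε ^ 2 - 2 * |u x| / ε =
              lam * (|u x| / lam - 1 / ε) ^ 2 := by
            rw [← sq_abs (u x)]
            field_simp
            ring
          have : 0 ≤ lam * (|u x| / lam - 1 / ε) ^ 2 := by positivity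
          linarith
        calc |u x| * (6 * M * C / ε) = 3 * M * C * (2 * |u x| / ε) := by ring
          _ ≤ _ := by gcongr
      · rw [indicator_of_notMem hxq, indicator_of_notMem hxq]
        simp
    have hmain : W x * (χ x * planeLaplacian Ψ x) ≤ N.indicator (fun _ => -c₀) x := by
      by_cases hxN : x ∈ N
      · have : χ x = 1 := by
          simp only [hχdef, hSdef, Finset.sum_eq_zero fun q hq => hf0 x q hq (hNQ x hxN q hq),
            sub_zero]
        rw [indicator_of_mem hxN, this, one_mul]
        exact hNc x hxN
      · rw [indicator_of_notMem hxN]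
        exact mul_nonpos_of_nonneg_of_nonpos (hW0 x)
          (mul_nonpos_of_nonneg_of_nonpos (hχ0 x) hΨΔ.le)
    have hηΔ : 0 ≤ χ x * Ψ x * planeLaplacian W x :=
      mul_nonneg (mul_nonneg (hχ0 x) hΨ0) (hΔW x hx)
    have hsum := Finset.sum_le_sum hcomm
    rw [Finset.sum_neg_distrib, ← Finset.mul_sum, Finset.sum_add_distrib, ← Finset.sum_mul,
      ← Finset.mul_sum, Finset.sum_add_distrib, ← Finset.sum_mul, ← Finset.sum_mul] at hsum
    linarith
  have hbq := fun q => integral_indicator_bound Measure.restrict_le_self hu2 hε hlam q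
  have hiN : Integrable (N.indicator fun _ => -c₀) (volume.restrict U) :=
    (integrable_const _).indicator hNm
  have hiq : ∀ q ∈ Q, Integrable (fun x => 3 * M * C * (Metric.closedBall q (2 * ε)).indicator
      (fun x => u x ^ 2 / lam + lam / ε ^ 2) x) (volume.restrict U) := fun q _ =>
    (hbq q).1.const_mul _
  have hle := setIntegral_mono_on hInt (hiN.add (integrable_finsetSum Q hiq)) hUo.measurableSet hpt
  rw [hzero] at hle
  simp only [Pi.add_apply] at hle
  rw [integral_add hiN (integrable_finsetSum Q hiq), integral_finsetSum Q hiq,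
    integral_indicator hNm, setIntegral_const, smul_eq_mul] at hle
  have hfin : ∑ q ∈ Q, ∫ x in U, 3 * M * C * (Metric.closedBall q (2 * ε)).indicator
      (fun x => u x ^ 2 / lam + lam / ε ^ 2) x ≤ ∑ q ∈ Q, 3 * M * C *
      ((∫ x in Metric.closedBall q (2 * ε), u x ^ 2 ∂(volume.restrict U)) / lam + 16 * lam) := by
    refine Finset.sum_le_sum fun q _ => ?_
    rw [integral_const_mul]
    exact mul_le_mul_of_nonneg_left (hbq q).2 (by positivity)
  linarith

lemma tendsto_setIntegral_closedBall_zero {μ : Measure (ℝ × ℝ)} (hμ : μ ≤ volume)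
    {g : ℝ × ℝ → ℝ} (hg : Integrable g μ) (q : ℝ × ℝ) :
    Tendsto (fun ε : ℝ => ∫ x in Metric.closedBall q (2 * ε), g x ∂μ) (𝓝[>] 0) (𝓝 0) := by
  refine hg.tendsto_setIntegral_nhds_zero ?_
  have hv : ∀ᶠ ε : ℝ in 𝓝[>] 0,
      μ (Metric.closedBall q (2 * ε)) ≤ ENNReal.ofReal (16 * ε ^ 2) := by
    filter_upwards [self_mem_nhdsWithin] with ε hε
    have hε' : 0 < ε := hε
    refine (hμ _).trans_eq ?_
    exact volume_closedBall_two_mul q hε'.le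
  refine tendsto_of_tendsto_of_tendsto_of_le_of_le' tendsto_const_nhds ?_
    (Eventually.of_forall fun _ => zero_le) hv
  have h1 : Tendsto (fun ε : ℝ => ENNReal.ofReal (16 * ε ^ 2)) (𝓝 0)
      (𝓝 (ENNReal.ofReal (16 * 0 ^ 2))) :=
    (ENNReal.continuous_ofReal.comp (by fun_prop)).tendsto 0
  simp only [ne_eq, OfNat.ofNat_ne_zero, not_false_eq_true, zero_pow, mul_zero,
    ENNReal.ofReal_zero] at h1
  exact h1.mono_left nhdsWithin_le_nhds

/-- A square integrable function, subharmonic where it is positive and vanishing on the boundary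
off a finite set, is nonpositive as soon as a suitable barrier exists. -/
lemma nonpos_of_planeLaplacian_nonneg_of_barrier (hUo : IsOpen U) (hUb : Bornology.IsBounded U)
    (hQ : (Q : Set (ℝ × ℝ)) ⊆ frontier U) (hC : 0 < C)
    (hΨ : ContDiffOn ℝ 2 Ψ U) (hΨU : ∀ x ∈ U, 0 ≤ Ψ x ∧
      planeLaplacian Ψ x < 0 ∧ (∀ q ∈ Q, Ψ x ≤ C * ‖x - q‖) ∧
      |dirDeriv (1, 0) Ψ x| ≤ C ∧ |dirDeriv (0, 1) Ψ x| ≤ C)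
    (hu2 : IntegrableOn (fun x => u x ^ 2) U) (hu : ContDiffOn ℝ 2 u U)
    (hΔ : ∀ x ∈ U, 0 < u x → 0 ≤ planeLaplacian u x)
    (hcont : ContinuousOn u (closure U \ (Q : Set (ℝ × ℝ))))
    (hub : ∀ x ∈ frontier U \ (Q : Set (ℝ × ℝ)), u x = 0) :
    ∀ x ∈ U, u x ≤ 0 := by
  intro x₀ hx₀
  by_contra! hpos
  obtain ⟨M, hM, hcut⟩ := exists_cutoff
  set δ := u x₀ / 2 with hδ
  have hδ0 : 0 < δ := half_pos hpos
  set c₀ := softPos (u x₀ - δ) * (-planeLaplacian Ψ x₀) / 2 with hc₀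
  have hc₀pos : 0 < softPos (u x₀ - δ) * (-planeLaplacian Ψ x₀) :=
    mul_pos (softPos_pos (by linarith)) (by linarith [(hΨU x₀ hx₀).2.1])
  have hUx : U ∈ 𝓝 x₀ := hUo.mem_nhds hx₀
  have hΨx : ContDiffAt ℝ 2 Ψ x₀ := hΨ.contDiffAt hUx
  have hdd : ∀ v, ContinuousAt (dirDeriv v (dirDeriv v Ψ)) x₀ := fun v =>
    (((hΨx.dirDeriv_one v).fderiv_right (m := 0) (by norm_num)).clm_apply
      contDiffAt_const).continuousAt
  have hca : ContinuousAt (fun x => softPos (u x - δ) * planeLaplacian Ψ x) x₀ :=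
    (contDiff_softPos.continuous.continuousAt.comp
      ((hu.contDiffAt hUx).continuousAt.sub continuousAt_const)).mul
      ((hdd (1, 0)).add (hdd (0, 1)))
  have hqpos : ∀ q ∈ Q, 0 < ‖x₀ - q‖ := by
    intro q hq
    refine norm_pos_iff.2 (sub_ne_zero.2 ?_)
    rintro rfl
    have := hQ hq
    rw [hUo.frontier_eq] at this
    exact this.2 hx₀
  have hev : ∀ᶠ x in 𝓝 x₀, x ∈ U ∧ softPos (u x - δ) * planeLaplacian Ψ x ≤ -c₀ ∧
      ∀ q ∈ Q, ‖x₀ - q‖ / 2 < ‖x - q‖ := by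
    refine (eventually_mem_nhds_iff.2 hUx |>.mono fun _ h => mem_of_mem_nhds h).and ((hca.eventually (ge_mem_nhds (by linarith))).and
      ((Finset.eventually_all Q).2 fun q hq => ?_))
    exact (continuous_id.sub continuous_const).norm.continuousAt.eventually
      (lt_mem_nhds (half_lt_self (hqpos q hq)))
  obtain ⟨s, hs, hN⟩ := Metric.eventually_nhds_iff_ball.1 hev
  have hfin : volume U < ⊤ := hUb.measure_lt_top
  have hκ : 0 < c₀ * (volume.restrict U).real (Metric.ball x₀ s) := by
    refine mul_pos (by linarith) ?_
    rw [measureReal_restrict_apply Metric.isOpen_ball.measurableSet,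
      inter_eq_left.2 fun x hx => (hN x hx).1]
    exact ENNReal.toReal_pos (Metric.measure_ball_pos _ _ hs).ne'
      Metric.isBounded_ball.measure_lt_top.ne
  set κ := c₀ * (volume.restrict U).real (Metric.ball x₀ s) with hκdef
  set lam := κ / (96 * M * C * (Q.card + 1)) with hlamdef
  have hlam : 0 < lam := by positivity
  have hlim : Tendsto (fun ε : ℝ => ∑ q ∈ Q, 3 * M * C *
      ((∫ x in Metric.closedBall q (2 * ε), u x ^ 2 ∂(volume.restrict U)) / lam + 16 * lam))
      (𝓝[>] 0) (𝓝 (∑ q ∈ Q, 3 * M * C * (0 / lam + 16 * lam))) :=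
    tendsto_finsetSum Q fun q _ => (((tendsto_setIntegral_closedBall_zero
      Measure.restrict_le_self hu2 q).div_const lam).add_const _).const_mul _
  have hval : ∑ q ∈ Q, 3 * M * C * (0 / lam + 16 * lam) < κ := by
    rw [Finset.sum_const, nsmul_eq_mul, zero_div, zero_add]
    have h1 : 96 * M * C * (Q.card + 1) * lam = κ := by
      rw [hlamdef]; field_simp
    have h2 : 0 < M * C * lam := by positivity
    have h3 : (0 : ℝ) ≤ Q.card := Nat.cast_nonneg _
    nlinarith [mul_nonneg h3 h2.le]
  have hdouble : Tendsto (fun ε : ℝ => 2 * ε) (𝓝[>] 0) (𝓝[>] 0) := by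
    refine tendsto_nhdsWithin_iff.2 ⟨?_, ?_⟩
    · have : Tendsto (fun ε : ℝ => 2 * ε) (𝓝 0) (𝓝 (2 * 0)) :=
        (continuous_const.mul continuous_id).tendsto 0
      rw [mul_zero] at this
      exact this.mono_left nhdsWithin_le_nhds
    · filter_upwards [self_mem_nhdsWithin] with ε hε
      exact mul_pos two_pos (mem_Ioi.1 hε)
  have hsmall : ∀ᶠ ε : ℝ in 𝓝[>] 0, ∀ q ∈ Q, 2 * ε < ‖x₀ - q‖ / 2 :=
    (Finset.eventually_all Q).2 fun q hq =>
      (hdouble.mono_right nhdsWithin_le_nhds).eventually (gt_mem_nhds (half_pos (hqpos q hq)))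
  obtain ⟨ε, hεlt, hsep, hεq, hε⟩ := ((hlim.eventually (gt_mem_nhds hval)).and
    ((hdouble.eventually (eventually_separated Q)).and (hsmall.and self_mem_nhdsWithin))).exists
  choose f hf using hcut ε hε
  have := mul_measureReal_le_of_barrier hUo hUb hC hM hε hlam hδ0 hΨ hΨU hf hsep hu2 hu hΔ hcont
    hub Metric.isOpen_ball.measurableSet (N := Metric.ball x₀ s) (c₀ := c₀)
    (fun x hx q hq => (hεq q hq).le.trans ((hN x hx).2.2 q hq).le) fun x hx => (hN x hx).2.1
  linarith

end OneSided

/-- Uniqueness of `L^p`, `p > 2`, solutions of `Δu = V u` on a bounded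
`C³` planar domain vanishing on the boundary away from finitely many points `Q`,
for `0 ≤ V ≲ Σᵢ 1/|x - xᵢ|`. -/
theorem uniqueness_Lp_planar
    (U : Set (ℝ × ℝ)) (hUo : IsOpen U) (hUne : U.Nonempty)
    (hUb : Bornology.IsBounded U)
    -- the boundary is, near each of its points, the graph of a C³ function
    -- after a rotation of coordinates
    (hC3 : ∀ x ∈ frontier U, ∃ (θ : ℝ) (φ : ℝ → ℝ) (ε : ℝ), 0 < ε ∧ ContDiff ℝ 3 φ ∧
      ∀ y : ℝ × ℝ, euclDist y x < ε →
        (y ∈ frontier U ↔ (rotPlane θ y).2 = φ ((rotPlane θ y).1)))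
    (Q : Finset (ℝ × ℝ)) (hQ : (Q : Set (ℝ × ℝ)) ⊆ frontier U)
    (p : ℝ) (hp : 2 < p) (C₀ : ℝ) (hC₀ : 0 < C₀)
    (V u : ℝ × ℝ → ℝ)
    (hV : ∀ x ∈ U, 0 ≤ V x ∧ V x ≤ ∑ xi ∈ Q, C₀ / euclDist x xi)
    (hu : MemLp u (ENNReal.ofReal p) (volume.restrict U))
    (huC3 : ContDiffOn ℝ 3 u (closure U \ (Q : Set (ℝ × ℝ))))
    (heq : ∀ x ∈ U, pdr (pdr u) x + pdz (pdz u) x = V x * u x)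
    (hub : ∀ x ∈ frontier U \ (Q : Set (ℝ × ℝ)), u x = 0) :
    ∀ x ∈ U, u x = 0 := by
  have hUsub : U ⊆ closure U \ (Q : Set (ℝ × ℝ)) := by
    refine fun x hx => ⟨subset_closure hx, fun hxQ => ?_⟩
    have := hQ hxQ
    rw [hUo.frontier_eq] at this
    exact this.2 hx
  have hu2 : ContDiffOn ℝ 2 u U := (huC3.of_le (by norm_num)).mono hUsub
  have : IsFiniteMeasure (volume.restrict U) := ⟨by
    rw [Measure.restrict_apply_univ]; exact hUb.measure_lt_top⟩
  have hsq : IntegrableOn (fun x => u x ^ 2) U := (hu.mono_exponent (p := 2) (by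
    rw [← ENNReal.ofReal_ofNat]
    exact ENNReal.ofReal_le_ofReal hp.le)).integrable_sq
  have hΔ : ∀ x ∈ U, planeLaplacian u x = V x * u x := fun x hx => by
    rw [← pdr_pdr_add_pdz_pdz_eq_planeLaplacian (hu2.contDiffAt (hUo.mem_nhds hx)), heq x hx]
  obtain ⟨Ψ, C, hC, hΨ, hΨU⟩ := exists_barrier hUo hUb (fun x hx => by
    obtain ⟨θ, φ, ε, hε, hφ, h⟩ := hC3 x hx
    exact ⟨θ, φ, ε, hε, hφ.of_le (by norm_num), h⟩) Q hQ
  intro x hx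
  refine le_antisymm ?_ ?_
  · exact nonpos_of_planeLaplacian_nonneg_of_barrier hUo hUb hQ hC hΨ hΨU hsq hu2
      (fun y hy h => by rw [hΔ y hy]; exact mul_nonneg (hV y hy).1 h.le)
      huC3.continuousOn hub x hx
  · refine neg_nonpos.1 (nonpos_of_planeLaplacian_nonneg_of_barrier (u := fun y => -u y) hUo hUb
      hQ hC hΨ hΨU (by simpa using hsq) hu2.neg (fun y hy h => ?_)
      huC3.continuousOn.neg (fun y hy => by rw [hub y hy, neg_zero]) x hx)
    rw [planeLaplacian_neg, hΔ y hy, ← mul_neg]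
    exact mul_nonneg (hV y hy).1 h.le
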